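/- arXiv:1602.02998 — 4 statements merged into one kernel-verified Lean document; each statement's English description precedes it below -/
import Mathlib

section
/- Let ℓ be a prime, k an algebraic closure of the field with ℓ elements, G a finite group, and b a block of kG. Suppose there exists a group automorphism φ of G such that the induced k-algebra automorphism φ : kG → kG (given by Σ_g α_g g ↦ Σ_g α_g φ(g)) satisfies φ(b) = σ(b). Then kGb is isomorphic as a k-algebra to its first Frobenius twist; in particular mf(kGb) = 1. -/
/-- A central idempotent of a ring. -/
def IsCentralIdem {R : Type*} [Ring R] (b : R) : Prop :=
  (∀ x, b * x = x * b) ∧ b * b = b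

/-- A block of a ring: a primitive idempotent of the center, i.e. a nonzero central
idempotent that is not a sum of two nonzero orthogonal central idempotents. -/
def IsBlock {R : Type*} [Ring R] (b : R) : Prop :=
  IsCentralIdem b ∧ b ≠ 0 ∧
    ∀ c d : R, IsCentralIdem c → IsCentralIdem d → c * d = 0 → b = c + d →
      c = 0 ∨ d = 0

/-- Galois conjugation `σ : kG → kG`, raising each coefficient to the `ℓ`-th power. -/
noncomputable def galois (ℓ : ℕ) (k : Type*) [Field k] [Fact ℓ.Prime] [CharP k ℓ]
    {G : Type*} [Group G] (x : MonoidAlgebra k G) : MonoidAlgebra k G :=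
  MonoidAlgebra.ofCoeff (Finsupp.mapRange (frobenius k ℓ) (map_zero _) x.coeff)

/-- The corner ideal `kG·b` of a central idempotent `b`, as a set. -/
def cornerSet {R : Type*} [Ring R] (b : R) : Set R := {x | x * b = x}

/-- If there is a group automorphism `φ` of `G` whose induced `k`-algebra automorphism
of `kG` (given by `Σ α_g g ↦ Σ α_g φ(g)`) sends the block `b` to `σ(b)`, then `kG·b`
is isomorphic as a `k`-algebra to its first Frobenius twist: there is a ring
isomorphism `ψ : kG·b → kG·b` with `ψ (λ • x) = λ^ℓ • ψ x`; in particular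
`mf(kGb) = 1`. -/
theorem block_group_automorphism_galois_iso_frobenius_twist
    (ℓ : ℕ) [Fact ℓ.Prime] (k : Type) [Field k] [IsAlgClosed k] [CharP k ℓ]
    [Algebra (ZMod ℓ) k] [IsAlgClosure (ZMod ℓ) k]
    (G : Type) [Group G] [Fintype G]
    (b : MonoidAlgebra k G) (hb : IsBlock b)
    (φ : G ≃* G) (hφ : Finsupp.mapDomain (⇑φ) b.coeff = (galois ℓ k b).coeff) :
    ∃ ψ : MonoidAlgebra k G → MonoidAlgebra k G,
      Set.BijOn ψ (cornerSet b) (cornerSet b) ∧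
      (∀ x ∈ cornerSet b, ∀ y ∈ cornerSet b, ψ (x + y) = ψ x + ψ y) ∧
      (∀ x ∈ cornerSet b, ∀ y ∈ cornerSet b, ψ (x * y) = ψ x * ψ y) ∧
      (∀ (c : k), ∀ x ∈ cornerSet b, ψ (c • x) = c ^ ℓ • ψ x) := by
  have : PerfectRing k ℓ := PerfectField.toPerfectRing ℓ
  let e₁ : MonoidAlgebra k G ≃+* MonoidAlgebra k G :=
    MonoidAlgebra.mapRingEquiv G (frobeniusEquiv k ℓ)
  let e₂ : MonoidAlgebra k G ≃+* MonoidAlgebra k G :=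
    MonoidAlgebra.mapDomainRingEquiv k φ
  let e : MonoidAlgebra k G ≃+* MonoidAlgebra k G := e₁.trans e₂.symm
  have h1 : e₁ b = e₂ b := by
    ext g
    have := DFunLike.congr_fun hφ g
    change Finsupp.mapDomain (φ.toEquiv) b.coeff g = _ at this
    rw [← Finsupp.equivMapDomain_eq_mapDomain φ.toEquiv b.coeff] at this
    simp [galois, e₁, e₂] at this ⊢
    exact this.symm
  have heb : e b = b := by simp [e, h1]
  refine ⟨e, ⟨?_, e.injective.injOn, ?_⟩, fun x _ y _ => map_add e x y,
    fun x _ y _ => map_mul e x y, ?_⟩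
  · intro x hx
    have hx : x * b = x := hx
    change e x * b = e x
    conv_lhs => rw [← heb]
    rw [← map_mul, hx]
  · intro y hy
    have hy : y * b = y := hy
    refine ⟨e.symm y, ?_, e.apply_symm_apply y⟩
    change e.symm y * b = e.symm y
    apply e.injective
    rw [map_mul, heb, e.apply_symm_apply, hy]
  · intro c x _
    apply e₂.injective
    ext g
    simp [e, e₁, e₂, mul_pow, frobenius_def]
end

section
/- Let ℓ be a prime, k an algebraic closure of the field with ℓ elements, n a natural number, and A_n the alternating group on n letters. Then every block b of kA_n satisfies mf(kA_n b) = 1; that is, kA_n b is Morita equivalent (as a k-algebra) to its first Frobenius twist. -/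
open CategoryTheory

/-- The corner of an idempotent `b`, as a non-unital subring of `R`. -/
def cornerSubring {R : Type*} [Ring R] (b : R) : NonUnitalSubring R where
  carrier := {x | b * x = x ∧ x * b = x}
  add_mem' := by
    rintro x y ⟨hx1, hx2⟩ ⟨hy1, hy2⟩
    exact ⟨by rw [mul_add, hx1, hy1], by rw [add_mul, hx2, hy2]⟩
  zero_mem' := ⟨mul_zero b, zero_mul b⟩
  neg_mem' := by
    rintro x ⟨h1, h2⟩
    exact ⟨by rw [mul_neg, h1], by rw [neg_mul, h2]⟩
  mul_mem' := by
    rintro x y ⟨hx1, hx2⟩ ⟨hy1, hy2⟩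
    refine ⟨by rw [← mul_assoc, hx1], by rw [mul_assoc, hy2]⟩

/-- The corner algebra `R·b` of a central idempotent `b`, as a type.  For a block `b`
of a group algebra `kG` this is the block algebra `kG·b`. -/
def Corner {R : Type*} [Ring R] (b : R) : Type _ := cornerSubring b

instance {R : Type*} [Ring R] (b : R) : NonUnitalRing (Corner b) :=
  inferInstanceAs (NonUnitalRing (cornerSubring b))

/-- For `b` a central idempotent, the corner `R·b` is a unital ring with identity `b`. -/
instance {R : Type*} [Ring R] (b : R) [hb : Fact (IsCentralIdem b)] : Ring (Corner b) where
  __ := (inferInstance : NonUnitalRing (Corner b))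
  one := ⟨b, hb.out.2, hb.out.2⟩
  one_mul x := Subtype.ext x.2.1
  mul_one x := Subtype.ext x.2.2

/-- For `b` a central idempotent in a `k`-algebra `R`, the corner `R·b` is a
`k`-algebra with unit `b`. -/
instance {k R : Type*} [CommSemiring k] [Ring R] [Algebra k R] (b : R)
    [hb : Fact (IsCentralIdem b)] : Algebra k (Corner b) where
  algebraMap :=
    { toFun := fun c => ⟨c • b, by rw [mul_smul_comm, hb.out.2],
        by rw [smul_mul_assoc, hb.out.2]⟩
      map_one' := Subtype.ext (one_smul k b)
      map_mul' := fun c d => Subtype.ext <| by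
        show (c * d) • b = (c • b) * (d • b)
        rw [smul_mul_assoc, mul_smul_comm, hb.out.2, smul_smul]
      map_zero' := Subtype.ext (zero_smul k b)
      map_add' := fun c d => Subtype.ext (add_smul c d b) }
  smul c x := ⟨c • x.1, by rw [mul_smul_comm, x.2.1], by rw [smul_mul_assoc, x.2.2]⟩
  commutes' c x := Subtype.ext <| by
    show (c • b) * x.1 = x.1 * (c • b)
    rw [smul_mul_assoc, mul_smul_comm, x.2.1, x.2.2]
  smul_def' c x := Subtype.ext <| by
    show c • x.1 = (c • b) * x.1
    rw [smul_mul_assoc, x.2.1]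

/-- The first Frobenius twist `A^(ℓ)` of a `k`-algebra `A`: the same ring, with the
`k`-action pulled back along `λ ↦ λ^{1/ℓ}`, i.e. `λ · x = λ^{1/ℓ} x`. -/
def FrobTwist (ℓ : ℕ) (A : Type*) : Type _ := A

instance (ℓ : ℕ) (A : Type*) [Ring A] : Ring (FrobTwist ℓ A) := inferInstanceAs (Ring A)

noncomputable instance (ℓ : ℕ) [Fact ℓ.Prime] (k : Type*) [Field k] [IsAlgClosed k]
    [CharP k ℓ] (A : Type*) [Ring A] [Algebra k A] : Algebra k (FrobTwist ℓ A) :=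
  RingHom.toAlgebra' ((algebraMap k A).comp ((frobeniusEquiv k ℓ).symm : k →+* k))
    (fun c x => Algebra.commutes (A := A) ((frobeniusEquiv k ℓ).symm c) x)

theorem fin (k A B: Type) [Field k] [Ring A] [Ring B] [Algebra k A] [Algebra k B] (e : A ≃ₐ[k] B) : 
   ∃ E : ModuleCat.{0} (A) ≌ ModuleCat.{0} (B),
      ∃ hadd : E.functor.Additive,
        @Functor.Linear k _ _ _ _ _ _ _ _ _ E.functor := 
  ⟨(MoritaEquivalence.ofAlgEquiv e).eqv, inferInstance, (MoritaEquivalence.ofAlgEquiv e).linear⟩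

theorem cycleType_pow_cop {n : ℕ} (g : Equiv.Perm (Fin n)) (m : ℕ) :
   m.Coprime (orderOf g) →  (g ^ m).cycleType = g.cycleType := by
  induction g using Equiv.Perm.cycle_induction_on with
  | base_one => simp
  | base_cycles s hs =>
    intro h
    rw [((hs.pow_iff).2 h).cycleType, hs.cycleType, Equiv.Perm.support_pow_coprime h]
  | induction_disjoint s t hd _ hs ht =>
    intro h
    rw [hd.orderOf] at h
    rw [hd.commute.mul_pow, (hd.pow_disjoint_pow m m).cycleType_mul, hd.cycleType_mul,
      hs (h.coprime_dvd_right (Nat.dvd_lcm_left _ _)), ht (h.coprime_dvd_right (Nat.dvd_lcm_right _ _))]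

theorem perm_rational {n : ℕ} (g : Equiv.Perm (Fin n)) (m : ℕ) 
   (h : m.Coprime (Nat.card (Equiv.Perm (Fin n)))) : IsConj g (g^m) := by
  rw [Equiv.Perm.isConj_iff_cycleType_eq]
  exact (cycleType_pow_cop g m (h.coprime_dvd_right (orderOf_dvd_natCard g))).symm

open Module in
theorem trace_sigma {K V : Type*} [Field K] [CharZero K] [IsAlgClosed K] [AddCommGroup V] [Module K V]
    [FiniteDimensional K V] (f : Module.End K V) (N : ℕ) (hN : N ≠ 0) (hf : f ^ N = 1)
    (s : K ≃+* K) (m : ℕ) (hs : ∀ z : K, z ^ N = 1 → s z = z ^ m) :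
    s (LinearMap.trace K V f) = LinearMap.trace K V (f ^ m) := by
  classical
  have hss : f.IsSemisimple := by
    refine Module.End.isSemisimple_of_squarefree_aeval_eq_zero (p := Polynomial.X ^ N - 1) ?_ ?_
    · have : ((N : ℕ) : K) ≠ 0 := by exact_mod_cast hN
      have := (Polynomial.separable_X_pow_sub_C (1:K) this one_ne_zero).squarefree
      simpa using this
    · simp [hf]
  have hint := DirectSum.isInternal_submodule_of_iSupIndep_of_iSup_eq_top
    f.eigenspaces_iSupIndep hss.iSup_eigenspace_eq_top
  have hfin : {i | f.eigenspace i ≠ ⊥}.Finite := 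
    WellFoundedGT.finite_ne_bot_of_iSupIndep f.eigenspaces_iSupIndep
  have key : ∀ (j : ℕ), LinearMap.trace K V (f ^ j) = 
      ∑ μ ∈ hfin.toFinset, μ ^ j * (finrank K (f.eigenspace μ) : K) := by
    intro j
    have hm : ∀ μ, Set.MapsTo (f ^ j) (f.eigenspace μ) (f.eigenspace μ) := by
      intro μ
      exact Module.End.mapsTo_genEigenspace_of_comm (Commute.pow_right rfl j) μ 1
    rw [LinearMap.trace_eq_sum_trace_restrict' hint hfin hm]
    refine Finset.sum_congr rfl fun μ _ => ?_
    have : (f ^ j).restrict (hm μ) = μ ^ j • LinearMap.id := by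
      ext ⟨x, hx⟩
      change (f ^ j) x = μ ^ j • x
      rw [Module.End.mem_eigenspace_iff] at hx
      clear hm
      induction j with
      | zero => simp
      | succ j ih => rw [pow_succ', Module.End.mul_apply, ih, map_smul, hx, smul_smul, pow_succ]
    rw [this]
    simp
  have k1 := key 1
  rw [pow_one] at k1
  rw [k1, key m, map_sum]
  refine Finset.sum_congr rfl fun μ hμ => ?_
  rw [map_mul, map_natCast, pow_one, hs]
  have hμ' : f.eigenspace μ ≠ ⊥ := by simpa using hμ
  obtain ⟨v, hv, hv0⟩ := Submodule.exists_mem_ne_zero_of_ne_bot hμ'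
  have := Module.End.HasEigenvector.pow_apply (f := f) (μ := μ) (v := v) ⟨hv, hv0⟩ N
  rw [hf, Module.End.one_apply] at this
  have h2 : (μ ^ N - 1) • v = 0 := by rw [sub_smul, one_smul, ← this, sub_self]
  rcases smul_eq_zero.1 h2 with h | h
  · exact sub_eq_zero.1 h
  · exact absurd h hv0

theorem exists_pow {K : Type*} [Field K] [CharZero K] [IsAlgClosed K] [Algebra ℚ K]
   (s : K ≃ₐ[ℚ] K) (N : ℕ) (hN : N ≠ 0) : ∃ m : ℕ, m.Coprime N ∧ ∀ z : K, z ^ N = 1 → s z = z ^ m := by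
  have : NeZero N := ⟨hN⟩
  have : NeZero (N : K) := ⟨by exact_mod_cast hN⟩
  obtain ⟨μ, hμ⟩ := HasEnoughRootsOfUnity.exists_primitiveRoot K N
  refine ⟨(hμ.autToPow ℚ s : ZMod N).val, ZMod.val_coe_unit_coprime _, fun z hz => ?_⟩
  obtain ⟨i, _, rfl⟩ := hμ.eq_pow_of_pow_eq_one hz
  rw [map_pow, ← hμ.autToPow_spec ℚ s, ← pow_mul, ← pow_mul, mul_comm]

theorem trace_rational (K : Type*) [Field K] [CharZero K] [IsAlgClosed K] [Algebra ℚ K] [IsGalois ℚ K] {G V : Type*} [Group G] [Finite G] 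
    (hG : ∀ (g : G) (m : ℕ), m.Coprime (Nat.card G) → IsConj g (g^m))
    [AddCommGroup V] [Module K V] [FiniteDimensional K V]
    (ρ : G →* Module.End K V) (g : G) : 
    ∃ q : ℚ, algebraMap ℚ K q = LinearMap.trace _ V (ρ g) := by
  refine (InfiniteGalois.mem_range_algebraMap_iff_fixed (k := ℚ) _).2 fun s => ?_
  obtain ⟨m, hm, hs⟩ := exists_pow s (Nat.card G) Nat.card_pos.ne'
  have h1 := trace_sigma (ρ g) (Nat.card G) Nat.card_pos.ne' (by rw [← map_pow, pow_card_eq_one', map_one]) 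
    s.toRingEquiv m hs
  refine Eq.trans h1 ?_
  obtain ⟨c, hc⟩ := isConj_iff.1 (hG g m hm)
  rw [← map_pow, ← hc, map_mul, LinearMap.trace_mul_comm, ← map_mul]
  simp

open MonoidAlgebra Polynomial
open scoped Classical in
noncomputable def csum (R : Type*) {G : Type*} [CommRing R] [Group G] [Fintype G] (c : ConjClasses G) :
    MonoidAlgebra R G := ∑ x ∈ Finset.univ.filter (fun x => ConjClasses.mk x = c), single x 1

theorem csum_comm (R : Type*) {G : Type*} [CommRing R] [Group G] [Fintype G] (c : ConjClasses G) 
    (y : MonoidAlgebra R G) : csum R c * y = y * csum R c := by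
  induction y using MonoidAlgebra.induction_linear with
  | zero => simp
  | add f g hf hg => rw [mul_add, add_mul, hf, hg]
  | single g r =>
    rw [csum, Finset.sum_mul, Finset.mul_sum]
    refine Finset.sum_nbij' (fun x => g⁻¹ * x * g) (fun x => g * x * g⁻¹) ?_ ?_ ?_ ?_ ?_
    · intro x hx
      simp only [Finset.mem_filter, Finset.mem_univ, true_and] at hx ⊢
      rw [← hx, ConjClasses.mk_eq_mk_iff_isConj, isConj_iff]
      exact ⟨g, by group⟩
    · intro x hx
      simp only [Finset.mem_filter, Finset.mem_univ, true_and] at hx ⊢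
      rw [← hx, ConjClasses.mk_eq_mk_iff_isConj, isConj_iff]
      exact ⟨g⁻¹, by group⟩
    · intro x _; group
    · intro x _; group
    · intro x _
      simp only [single_mul_single, one_mul, mul_one]
      congr 1
      group

theorem csum_map {R S : Type*} {G : Type*} [CommRing R] [CommRing S] [Group G] [Fintype G] (f : R →+* S)
    (c : ConjClasses G) : mapRingHom G f (csum R c) = csum S c := by
  simp [csum]

theorem csum_eigen (K : Type*) [Field K] [CharZero K] [IsAlgClosed K] [Algebra ℚ K] [IsGalois ℚ K] {G : Type*} [Group G] [Fintype G] 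
    (hG : ∀ (g : G) (m : ℕ), m.Coprime (Nat.card G) → IsConj g (g^m)) (c : ConjClasses G)
    (μ : K)
    (hμ : Module.End.HasEigenvalue (LinearMap.mulLeft K (csum K c)) μ) :
    ∃ q : ℚ, algebraMap ℚ K q = μ := by
  classical
  set V := Module.End.eigenspace (LinearMap.mulLeft K (csum K c)) μ with hV
  have mem : ∀ v, v ∈ V ↔ csum K c * v = μ • v := fun v => by
    rw [hV, Module.End.mem_eigenspace_iff, LinearMap.mulLeft_apply]
  have hst : ∀ g : G, ∀ v ∈ V, LinearMap.mulLeft K (single g (1:K)) v ∈ V := by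
    intro g v hv
    rw [mem] at hv ⊢
    rw [LinearMap.mulLeft_apply, ← mul_assoc, csum_comm, mul_assoc, hv, mul_smul_comm]
  have : Module.Finite K (MonoidAlgebra K G) := inferInstance
  let ρ : G →* Module.End K V := 
    { toFun := fun g => (LinearMap.mulLeft K (single g (1:K))).restrict (hst g)
      map_one' := by
        ext v : 2
        change single (1:G) (1:K) * (v : MonoidAlgebra K G) = (v : MonoidAlgebra K G)
        rw [← one_def, one_mul]
      map_mul' := fun g h => by
        ext v : 2
        change single (g * h) (1:K) * (v : MonoidAlgebra K G) = single g (1:K) * (single h (1:K) * (v : MonoidAlgebra K G))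
        rw [← mul_assoc, single_mul_single, one_mul] }
  have hρ : ∑ x ∈ Finset.univ.filter (fun x => ConjClasses.mk x = c), ρ x = μ • 1 := by
    ext v : 2
    have := (mem _).1 v.2
    rw [csum, Finset.sum_mul] at this
    rw [LinearMap.sum_apply]
    simp only [AddSubmonoidClass.coe_finsetSum]
    exact this
  have htr := congrArg (LinearMap.trace K V) hρ
  choose q hq using trace_rational K hG ρ
  rw [map_sum, map_smul, LinearMap.trace_one, smul_eq_mul] at htr
  have hd : (Module.finrank K V : K) ≠ 0 := by
    have hne : V ≠ ⊥ := hμ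
    have : Module.finrank K V ≠ 0 := by
      rwa [Ne, Submodule.finrank_eq_zero]
    exact_mod_cast this
  refine ⟨(∑ x ∈ Finset.univ.filter (fun x => ConjClasses.mk x = c), q x) / (Module.finrank K V : ℚ), ?_⟩
  rw [map_div₀, map_sum, map_natCast, div_eq_iff hd, ← htr]
  exact Finset.sum_congr rfl fun x _ => hq x

theorem csum_int (K : Type*) [Field K] [CharZero K] [IsAlgClosed K] [Algebra ℚ K] [IsGalois ℚ K] {G : Type*} [Group G] [Fintype G] 
    (hG : ∀ (g : G) (m : ℕ), m.Coprime (Nat.card G) → IsConj g (g^m)) (c : ConjClasses G) :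
    ∃ s : Multiset ℤ, aeval (csum ℤ c) (s.map (fun m => X - C m)).prod = 0 := by
  set T := LinearMap.mulLeft K (csum K c) with hT
  have hint : ∀ μ : K, Module.End.HasEigenvalue T μ → ∃ m : ℤ, (m : K) = μ := by
    intro μ hμ
    obtain ⟨q, rfl⟩ := csum_eigen K hG c μ hμ
    obtain ⟨v, hv⟩ := hμ.exists_hasEigenvector
    have h1 : IsIntegral ℤ (csum ℤ c) := Algebra.IsIntegral.isIntegral _
    obtain ⟨p, hp, hp0⟩ := h1
    have h2 : aeval (csum K c) (p.map (Int.castRingHom K)) = 0 := by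
      have := congrArg (mapRingHom G (Int.castRingHom K)) hp0
      rw [hom_eval₂, csum_map, map_zero] at this
      rw [← this, aeval_def, eval₂_map]
      congr 1
      exact Subsingleton.elim _ _
    have h3 : aeval T (p.map (Int.castRingHom K)) = 0 := by
      have e : T = Algebra.lmul K _ (csum K c) := rfl
      rw [e, aeval_algHom_apply, h2, map_zero]
    have h4 := Module.End.aeval_apply_of_hasEigenvector (p := p.map (Int.castRingHom K)) hv
    rw [h3, LinearMap.zero_apply] at h4
    have h5 := (smul_eq_zero.1 h4.symm).resolve_right hv.2
    have h6 : IsIntegral ℤ q := by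
      refine ⟨p, hp, ?_⟩
      apply (algebraMap ℚ K).injective
      rw [hom_eval₂, map_zero, ← h5, Polynomial.eval_map]
      congr 1
      exact Subsingleton.elim _ _
    obtain ⟨m, rfl⟩ := IsIntegrallyClosed.isIntegral_iff.1 h6
    exact ⟨m, by simp⟩
  have hsp := (IsAlgClosed.splits (minpoly K T))
  have hTi : IsIntegral K T := Algebra.IsIntegral.isIntegral _
  have hprod := hsp.eq_prod_roots_of_monic (minpoly.monic hTi)
  have hex : ∃ s : Multiset ℤ, s.map (fun m : ℤ => (m : K)) = (minpoly K T).roots := by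
    have : ∀ μ ∈ (minpoly K T).roots, μ ∈ Set.range (fun m : ℤ => (m : K)) := by
      intro μ hμ
      exact hint μ (Module.End.hasEigenvalue_of_isRoot (isRoot_of_mem_roots hμ))
    have hc : CanLift K ℤ (fun m : ℤ => (m : K)) (fun μ => μ ∈ Set.range (fun m : ℤ => (m : K))) := ⟨fun _ h => h⟩
    exact (Multiset.canLift (fun m : ℤ => (m : K)) (fun μ => μ ∈ Set.range (fun m : ℤ => (m : K)))).prf _ this
  obtain ⟨s, hs⟩ := hex
  refine ⟨s, ?_⟩
  have hz := minpoly.aeval K T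
  rw [hprod, ← hs] at hz
  have e : T = Algebra.lmul K _ (csum K c) := rfl
  rw [e, aeval_algHom_apply] at hz
  have hz2 := congrArg (fun f : Module.End K (MonoidAlgebra K G) => f 1) hz
  simp only [Algebra.coe_lmul_eq_mul, LinearMap.mul_apply_apply, mul_one, LinearMap.zero_apply] at hz2
  have inj : Function.Injective (mapRingHom G (Int.castRingHom K)) := by
    intro x y hxy
    ext g
    have := congrArg (fun z => z.coeff g) hxy
    simpa using this
  apply inj
  rw [map_zero, ← hz2, aeval_def, hom_eval₂, csum_map, aeval_def]
  have : (s.map (fun m : ℤ => (m : K))).map (fun a => X - C a) = 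
     (s.map (fun m => X - C m)).map (Polynomial.mapRingHom (Int.castRingHom K)) := by
    rw [Multiset.map_map, Multiset.map_map]
    refine Multiset.map_congr rfl fun x _ => ?_
    simp
  rw [this, ← map_multiset_prod, Polynomial.coe_mapRingHom, eval₂_map]
  congr 1
  exact Subsingleton.elim _ _

theorem csum_int' {G : Type*} [Group G] [Fintype G] 
    (hG : ∀ (g : G) (m : ℕ), m.Coprime (Nat.card G) → IsConj g (g^m)) (c : ConjClasses G) :
    ∃ s : Multiset ℤ, aeval (csum ℤ c) (s.map (fun m => X - C m)).prod = 0 := by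
  let _ : Algebra ℚ (AlgebraicClosure ℚ) := AlgebraicClosure.instAlgebra ℚ
  have : IsGalois ℚ (AlgebraicClosure ℚ) := IsGalois.mk
  exact csum_int (AlgebraicClosure ℚ) hG c

theorem csum_nil (ℓ : ℕ) [Fact ℓ.Prime] (k : Type*) [Field k] [CharP k ℓ] {G : Type*} [Group G] [Fintype G] 
    (hG : ∀ (g : G) (m : ℕ), m.Coprime (Nat.card G) → IsConj g (g^m)) (c : ConjClasses G) :
    IsNilpotent (csum k c ^ ℓ - csum k c) := by
  obtain ⟨s, hs⟩ := csum_int' hG c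
  refine ⟨Multiset.card s, ?_⟩
  have h1 : aeval (csum k c) ((s.map (fun m : ℤ => X - C (m : k))).prod) = 0 := by
    have := congrArg (MonoidAlgebra.mapRingHom G (Int.castRingHom k)) hs
    rw [map_zero, aeval_def, hom_eval₂, csum_map] at this
    rw [← this, aeval_def]
    have : (s.map (fun a : ℤ => X - C (a : k))) = 
       (s.map (fun m => X - C m)).map (Polynomial.mapRingHom (Int.castRingHom k)) := by
      rw [Multiset.map_map]
      refine Multiset.map_congr rfl fun x _ => ?_
      simp
    rw [this, ← map_multiset_prod, Polynomial.coe_mapRingHom, eval₂_map]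
    congr 1
    exact Subsingleton.elim _ _
  have h2 : (s.map (fun m : ℤ => X - C (m : k))).prod ∣ (X ^ ℓ - X) ^ (Multiset.card s) := by
    clear h1 hs
    induction s using Multiset.induction_on with
    | empty => simp
    | cons a s ih =>
      rw [Multiset.map_cons, Multiset.prod_cons, Multiset.card_cons, pow_succ']
      refine mul_dvd_mul ?_ ih
      rw [dvd_iff_isRoot]
      have : (a : k) ^ ℓ = a := by
        have := map_intCast (frobenius k ℓ) a
        rwa [frobenius_def] at this
      simp [this]
  obtain ⟨r, hr⟩ := h2
  have := congrArg (aeval (csum k c)) hr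
  rw [map_mul, h1, zero_mul] at this
  simpa using this

theorem coeff_class {k G : Type*} [Field k] [Group G] [Fintype G] (e : MonoidAlgebra k G)
   (he : ∀ x, e * x = x * e) (g h : G) (hgh : IsConj g h) : e.coeff g = e.coeff h := by
  obtain ⟨c, rfl⟩ := isConj_iff.1 hgh
  have := congrArg (fun z => z.coeff (c * g)) (he (single c 1))
  simpa [coeff_mul_single_apply, coeff_single_mul_apply] using this.symm

theorem eq_sum_csum {k G : Type*} [Field k] [Group G] [Fintype G] [Fintype (ConjClasses G)] (e : MonoidAlgebra k G)
   (he : ∀ x, e * x = x * e) : ∃ a : ConjClasses G → k, e = ∑ c, a c • csum k c := by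
  classical
  refine ⟨fun c => e.coeff c.out, ?_⟩
  have hc : ∀ (c : ConjClasses G) (g : G), (csum k c).coeff g = if ConjClasses.mk g = c then 1 else 0 := by
    intro c g
    simp [csum, MonoidAlgebra.coeff_sum, Finsupp.single_apply]
  ext g
  simp only [MonoidAlgebra.coeff_sum, Finsupp.finsetSum_apply, MonoidAlgebra.coeff_smul, Finsupp.smul_apply, hc]
  simp
  apply coeff_class e he
  rw [← ConjClasses.mk_eq_mk_iff_isConj]
  exact (Quotient.out_eq (ConjClasses.mk g)).symm

theorem idem_eq_of_nilp {R : Type*} [CommRing R] (e f : R) (ie : e * e = e) (jf : f * f = f)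
    (h : IsNilpotent (e - f)) : e = f := by
  have h3 : (e - f) ^ 3 = e - f := by
    linear_combination (e + 1 - 3 * f) * ie - (f + 1 - 3 * e) * jf
  have h4 : ∀ N, (e - f) ^ (3 ^ N) = e - f := by
    intro N
    induction N with
    | zero => simp
    | succ N ih => rw [pow_succ, pow_mul, ih, h3]
  obtain ⟨N, hN⟩ := h
  have h5 := pow_eq_zero_of_le (Nat.lt_pow_self (a := 3) (n := N) (by norm_num)).le hN
  rw [h4] at h5
  exact sub_eq_zero.1 h5

theorem sum_pow_nilp {R k ι : Type*} [CommRing R] [Field k] [Algebra k R] [Fintype ι] 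
    (ℓ : ℕ) [Fact ℓ.Prime] [CharP R ℓ] (a : ι → k) (s : ι → R) (h : ∀ i, IsNilpotent (s i ^ ℓ - s i)) :
    IsNilpotent ((∑ c, a c • s c) ^ ℓ - ∑ c, a c ^ ℓ • s c) := by
  rw [sum_pow_char, ← Finset.sum_sub_distrib]
  refine isNilpotent_sum fun c _ => ?_
  rw [_root_.smul_pow, ← smul_sub]
  exact IsNilpotent.smul (h c) _

theorem central_idem_fixed (ℓ : ℕ) [Fact ℓ.Prime] (k : Type*) [Field k] [CharP k ℓ] {G : Type*} [Group G] [Fintype G] 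
    (hG : ∀ (g : G) (m : ℕ), m.Coprime (Nat.card G) → IsConj g (g^m)) (e : MonoidAlgebra k G)
    (he : ∀ x, e * x = x * e) (hee : e * e = e) : MonoidAlgebra.mapRingHom G (frobenius k ℓ) e = e := by
  classical
  have : Fintype (ConjClasses G) := Fintype.ofFinite _
  obtain ⟨a, ha⟩ := eq_sum_csum e he
  set Z := Subalgebra.center k (MonoidAlgebra k G)
  let s : ConjClasses G → Z := fun c => ⟨csum k c, Subalgebra.mem_center_iff.2 fun y => (csum_comm k c y).symm⟩
  have : CharP Z ℓ := charP_of_injective_algebraMap (algebraMap k Z).injective ℓ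
  let e' : Z := ∑ c, a c • s c
  have he' : (e' : MonoidAlgebra k G) = e := by
    rw [ha]; simp [e', s]
  let f' : Z := ∑ c, (a c) ^ ℓ • s c
  have hf' : (f' : MonoidAlgebra k G) = MonoidAlgebra.mapRingHom G (frobenius k ℓ) e := by
    rw [ha, map_sum]
    simp only [f', s, AddSubmonoidClass.coe_finsetSum]
    refine Finset.sum_congr rfl fun c _ => ?_
    rw [Algebra.smul_def (a c), map_mul, csum_map]
    simp [Algebra.smul_def, frobenius_def]
  have ie : e' * e' = e' := by
    apply Subtype.ext
    simp [he', hee]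
  have if' : f' * f' = f' := by
    apply Subtype.ext
    simp only [MulMemClass.coe_mul, hf']
    rw [← map_mul, hee]
  have hnil : IsNilpotent (e' - f') := by
    have h1 : e' ^ ℓ = e' := IsIdempotentElem.pow_eq ie (Nat.Prime.ne_zero Fact.out)
    rw [← h1]
    refine sum_pow_nilp ℓ a s fun c => ?_
    obtain ⟨N, hN⟩ := csum_nil ℓ k hG c
    exact ⟨N, Subtype.ext hN⟩
  rw [← hf', ← he', idem_eq_of_nilp e' f' ie if' hnil]

theorem IsBlock.map_equiv {R : Type*} [Ring R] (f : R ≃+* R) {b : R} (hb : IsBlock b) : IsBlock (f b) := by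
  have key : ∀ (g : R ≃+* R) (c : R), IsCentralIdem c → IsCentralIdem (g c) := by
    intro g c hc
    refine ⟨fun x => ?_, by rw [← map_mul, hc.2]⟩
    obtain ⟨y, rfl⟩ := g.surjective x
    rw [← map_mul, hc.1, map_mul]
  refine ⟨key f b hb.1, by simpa using hb.2.1, fun c d hc hd hcd h => ?_⟩
  have := hb.2.2 (f.symm c) (f.symm d) (key _ _ hc) (key _ _ hd) (by rw [← map_mul, hcd, map_zero])
    (by rw [← map_add, ← h, RingEquiv.symm_apply_apply])
  simpa using this

theorem IsBlock.sub_mul {R : Type*} [Ring R] {b c : R} (hb : IsBlock b) (hc : IsCentralIdem c) :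
    b * c = 0 ∨ b * c = b := by
  have h1 : IsCentralIdem (b * c) := ⟨fun x => by rw [mul_assoc, hc.1, ← mul_assoc, hb.1.1, mul_assoc], by
    rw [mul_assoc, ← mul_assoc c, hc.1 b, mul_assoc b c c, hc.2, ← mul_assoc, hb.1.2]⟩
  have h3 : b * c * b = b * c := by rw [mul_assoc, hc.1, ← mul_assoc, hb.1.2]
  have h4 : b * (b * c) = b * c := by rw [← mul_assoc, hb.1.2]
  have h2 : IsCentralIdem (b - b * c) := ⟨fun x => by rw [_root_.sub_mul, mul_sub, hb.1.1, h1.1], by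
    rw [mul_sub, _root_.sub_mul, _root_.sub_mul, h1.2, h3, h4, hb.1.2]; simp⟩
  rcases hb.2.2 _ _ h1 h2 (by rw [mul_sub, h1.2, h3, sub_self]) (by abel) with h | h
  · exact Or.inl h
  · exact Or.inr (sub_eq_zero.1 h).symm

theorem IsBlock.orth {R : Type*} [Ring R] {b c : R} (hb : IsBlock b) (hc : IsBlock c) (h : b ≠ c) :
    b * c = 0 := by
  rcases hb.sub_mul hc.1 with h1 | h1
  · exact h1
  rcases hc.sub_mul hb.1 with h2 | h2
  · rw [hb.1.1, h2]
  · exact absurd (by rw [← h1, hb.1.1, h2]) h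

section
variable {k G : Type*} [Field k] [Group G] (H : Subgroup G) [H.Normal]

noncomputable def phi (t : G) : MonoidAlgebra k H ≃ₐ[k] MonoidAlgebra k H :=
  MonoidAlgebra.domCongr k k (MulAut.conjNormal t)

noncomputable def iot : MonoidAlgebra k H →ₐ[k] MonoidAlgebra k G :=
  MonoidAlgebra.mapDomainAlgHom k k H.subtype

theorem phi_mul (s t : G) (x : MonoidAlgebra k H) : phi H s (phi H t x) = phi H (s * t) x := by
  induction x using MonoidAlgebra.induction_linear with
  | zero => simp
  | add f g hf hg => simp only [map_add, hf, hg]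
  | single g r => simp [phi]

theorem iot_conj (t : G) (x : MonoidAlgebra k H) (r : k) : 
    single t r * iot H x = iot H (phi H t x) * single t r := by
  induction x using MonoidAlgebra.induction_linear with
  | zero => simp
  | add f g hf hg => simp only [map_add, mul_add, add_mul, hf, hg]
  | single g r => simp [phi, iot, single_mul_single, mul_comm]

theorem iot_inj : Function.Injective (iot (k := k) H) := 
  MonoidAlgebra.mapDomain_injective H.subtype_injective

theorem iot_frob (f : k →+* k) (x : MonoidAlgebra k H) :
    iot H (MonoidAlgebra.mapRingHom H f x) = MonoidAlgebra.mapRingHom G f (iot H x) := by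
  induction x using MonoidAlgebra.induction_linear with
  | zero => simp
  | add f g hf hg => simp only [map_add, hf, hg]
  | single g r => simp [iot]

theorem exists_conj (ℓ : ℕ) [Fact ℓ.Prime] [CharP k ℓ] [Fintype G] (f : k ≃+* k) (hf : ∀ x, f x = x ^ ℓ)
    (hG : ∀ (g : G) (m : ℕ), m.Coprime (Nat.card G) → IsConj g (g^m)) (b : MonoidAlgebra k H)
    (hb : IsBlock b) : ∃ t : G, phi H t b = MonoidAlgebra.mapRingEquiv H f b := by
  classical
  by_contra! hne
  set F := MonoidAlgebra.mapRingEquiv H f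
  let O : Finset (MonoidAlgebra k H) := Finset.univ.image (fun t => phi H t b)
  let e := ∑ c ∈ O, c
  have hO : ∀ c ∈ O, IsBlock c ∧ c ≠ F b := by
    intro c hc
    obtain ⟨t, _, rfl⟩ := Finset.mem_image.1 hc
    exact ⟨hb.map_equiv (phi H t).toRingEquiv, hne t⟩
  have hmul : ∀ c ∈ O, c * e = c := by
    intro c hc
    rw [Finset.mul_sum, Finset.sum_eq_single c]
    · exact (hO c hc).1.1.2
    · intro d hd hdc
      exact (hO c hc).1.orth (hO d hd).1 hdc.symm
    · intro h; exact absurd hc h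
  have hee : e * e = e := by
    conv_lhs => enter [1]; unfold e
    rw [Finset.sum_mul]
    exact Finset.sum_congr rfl hmul
  have hFe : F b * e = 0 := by
    rw [Finset.mul_sum]
    exact Finset.sum_eq_zero fun c hc => (hb.map_equiv F).orth (hO c hc).1 (hO c hc).2.symm
  have hphi : ∀ t, phi H t e = e := by
    intro t
    rw [map_sum]
    refine Finset.sum_bij (fun c _ => phi H t c) ?_ ?_ ?_ ?_
    · intro c hc
      obtain ⟨s, _, rfl⟩ := Finset.mem_image.1 hc
      exact Finset.mem_image.2 ⟨t * s, Finset.mem_univ _, (phi_mul H t s b).symm⟩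
    · intro c _ d _ h
      exact (phi H t).injective h
    · intro c hc
      obtain ⟨s, _, rfl⟩ := Finset.mem_image.1 hc
      refine ⟨phi H (t⁻¹ * s) b, Finset.mem_image.2 ⟨_, Finset.mem_univ _, rfl⟩, ?_⟩
      rw [phi_mul, mul_inv_cancel_left]
    · intros; rfl
  have hcen : ∀ x, iot H e * x = x * iot H e := by
    intro x
    induction x using MonoidAlgebra.induction_linear with
    | zero => simp
    | add f g hf hg => simp only [mul_add, add_mul, hf, hg]
    | single g r => rw [iot_conj, hphi]
  have hfix := central_idem_fixed ℓ k hG (iot H e) hcen (by rw [← map_mul, hee])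
  rw [← iot_frob] at hfix
  have hfix2 := iot_inj H hfix
  have hF : F e = e := by
    conv_rhs => rw [← hfix2]
    ext g
    simp [F, hf, frobenius_def]
  have hb1 : b ∈ O := Finset.mem_image.2 ⟨1, Finset.mem_univ _, by
    ext g
    simp only [phi, map_one, MonoidAlgebra.coeff_domCongr]
    rfl⟩
  have : F b = 0 := by
    rw [← hFe]
    conv_rhs => rw [← hF, ← map_mul, hmul b hb1]
  exact hb.2.1 (by simpa using this)
end

theorem corner_equiv (ℓ : ℕ) [Fact ℓ.Prime] (k : Type) [Field k] [IsAlgClosed k] [CharP k ℓ]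
    {R : Type} [Ring R] [Algebra k R] (b : R) [Fact (IsCentralIdem b)] (ψ : R ≃+* R)
    (hψ : ∀ (c : k) x, ψ (c • x) = c ^ ℓ • ψ x) (hb : ψ b = b) :
    Nonempty (Corner b ≃ₐ[k] FrobTwist ℓ (Corner b)) := by
  have hb' : ψ.symm b = b := by rw [RingEquiv.symm_apply_eq, hb]
  have hmem : ∀ (g : R ≃+* R), g b = b → ∀ y : R, b * y = y ∧ y * b = y →
      b * g y = g y ∧ g y * b = g y := by
    intro g hg y hy
    constructor
    · have := map_mul g b y
      rw [hy.1, hg] at this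
      exact this.symm
    · have := map_mul g y b
      rw [hy.2, hg] at this
      exact this.symm
  let θ : FrobTwist ℓ (Corner b) ≃+* Corner b :=
    { toFun := fun x => ⟨ψ x.1, hmem ψ hb x.1 x.2⟩
      invFun := fun x => ⟨ψ.symm x.1, hmem ψ.symm hb' x.1 x.2⟩
      left_inv := fun x => Subtype.ext (ψ.symm_apply_apply x.1)
      right_inv := fun x => Subtype.ext (ψ.apply_symm_apply x.1)
      map_mul' := fun x y => Subtype.ext (map_mul ψ x.1 y.1)
      map_add' := fun x y => Subtype.ext (map_add ψ x.1 y.1) }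
  refine ⟨(AlgEquiv.ofRingEquiv (f := θ) fun c => Subtype.ext ?_).symm⟩
  change ψ ((frobeniusEquiv k ℓ).symm c • b) = c • b
  rw [hψ, hb, frobeniusEquiv_symm_pow_p]

/-- Every block `b` of `kA_n`, with `k` an algebraic closure of `𝔽_ℓ`, has Morita
Frobenius number `1`: the block algebra `kA_n·b` is Morita equivalent, as a
`k`-algebra, to its first Frobenius twist; i.e. there is a `k`-linear equivalence
between the module categories of `kA_n·b` and of its first Frobenius twist. -/
theorem alternatingGroup_block_morita_frobenius_number_one
    (ℓ : ℕ) [Fact ℓ.Prime] (k : Type) [Field k] [IsAlgClosed k] [CharP k ℓ]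
    [Algebra (ZMod ℓ) k] [IsAlgClosure (ZMod ℓ) k]
    (n : ℕ) (b : MonoidAlgebra k (alternatingGroup (Fin n)))
    (hb : IsBlock b) [Fact (IsCentralIdem b)] :
    ∃ E : ModuleCat.{0} (Corner b) ≌ ModuleCat.{0} (FrobTwist ℓ (Corner b)),
      ∃ hadd : E.functor.Additive,
        @Functor.Linear k _ _ _ _ _ _ _ _ _ E.functor := by
  obtain ⟨t, ht⟩ := exists_conj (alternatingGroup (Fin n)) ℓ (frobeniusEquiv k ℓ)
    (fun x => frobeniusEquiv_apply k ℓ x) perm_rational b hb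
  obtain ⟨e⟩ := corner_equiv ℓ k b
    ((MonoidAlgebra.mapRingEquiv (alternatingGroup (Fin n)) (frobeniusEquiv k ℓ)).trans
      (phi (alternatingGroup (Fin n)) t).symm.toRingEquiv) (fun c x => by
        have : MonoidAlgebra.mapRingEquiv (alternatingGroup (Fin n)) (frobeniusEquiv k ℓ) (c • x) =
          c ^ ℓ • MonoidAlgebra.mapRingEquiv (alternatingGroup (Fin n)) (frobeniusEquiv k ℓ) x := by
          ext g
          simp [mul_pow, frobenius_def]
        change (phi (alternatingGroup (Fin n)) t).symm (MonoidAlgebra.mapRingEquiv (alternatingGroup (Fin n))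
          (frobeniusEquiv k ℓ) (c • x)) =
          c ^ ℓ • (phi (alternatingGroup (Fin n)) t).symm (MonoidAlgebra.mapRingEquiv (alternatingGroup (Fin n))
          (frobeniusEquiv k ℓ) x)
        rw [this, map_smul]) (by
        change (phi (alternatingGroup (Fin n)) t).symm (MonoidAlgebra.mapRingEquiv (alternatingGroup (Fin n))
          (frobeniusEquiv k ℓ) b) = b
        rw [← ht, AlgEquiv.symm_apply_apply])
  exact fin k _ _ e
end

section
/- Let ℓ be a prime, k an algebraic closure of the field with ℓ elements, n a natural number, and G a finite group possessing a central subgroup Z of order 2 such that G/Z is isomorphic to the symmetric group S_n (i.e. G is a double cover of S_n). Then every block b of kG satisfies mf(kGb) = 1; that is, kGb is Morita equivalent (as a k-algebra) to its first Frobenius twist. -/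
open CategoryTheory

section P1
variable {ℓ : ℕ} [Fact ℓ.Prime] {k : Type} [Field k] [IsAlgClosed k] [CharP k ℓ]

theorem P1.main {R : Type} [Ring R] [Algebra k R] (b : R) [Fact (IsCentralIdem b)]
    (s : R ≃+* R) (hs : ∀ (c : k) (x : R), s (c • x) = c ^ ℓ • s x) (hsb : s b = b) :
    ∃ E : ModuleCat.{0} (Corner b) ≌ ModuleCat.{0} (FrobTwist ℓ (Corner b)),
      ∃ hadd : E.functor.Additive,
        @Functor.Linear k _ _ _ _ _ _ _ _ _ E.functor := by
  have hsb' : s.symm b = b := by rw [RingEquiv.symm_apply_eq, hsb]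
  let r : FrobTwist ℓ (Corner b) ≃+* Corner b :=
    { toFun := fun x => ⟨s x.1, by
          have h1 := congrArg s x.2.1
          rwa [map_mul, hsb] at h1, by
          have h1 := congrArg s x.2.2
          rwa [map_mul, hsb] at h1⟩
      invFun := fun x => ⟨s.symm x.1, by
          have h1 := congrArg s.symm x.2.1
          rwa [map_mul, hsb'] at h1, by
          have h1 := congrArg s.symm x.2.2
          rwa [map_mul, hsb'] at h1⟩
      left_inv := fun x => Subtype.ext (s.symm_apply_apply _)
      right_inv := fun x => Subtype.ext (s.apply_symm_apply _)
      map_mul' := fun x y => Subtype.ext (map_mul s _ _)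
      map_add' := fun x y => Subtype.ext (map_add s _ _) }
  let f : FrobTwist ℓ (Corner b) ≃ₐ[k] Corner b := AlgEquiv.ofRingEquiv (f := r) (by
    intro c
    apply Subtype.ext
    change s (((frobeniusEquiv k ℓ).symm c) • b) = c • b
    rw [hs, hsb]
    congr 1
    exact (frobeniusEquiv k ℓ).apply_symm_apply c)
  let M := MoritaEquivalence.ofAlgEquiv f.symm
  exact ⟨M.eqv, inferInstance, M.linear⟩
end P1

section P2a
open Polynomial in
theorem P2.trace_pow {ℓ : ℕ} [Fact ℓ.Prime] {k : Type} [Field k] [CharP k ℓ] {d : ℕ} [NeZero d]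
    (M : Matrix (Fin d) (Fin d) k) : (M ^ ℓ).trace = M.trace ^ ℓ := by
  have hl : 0 < ℓ := (Fact.out : ℓ.Prime).pos
  have key : expand k ℓ (M ^ ℓ).charpoly = M.charpoly ^ ℓ := by
    unfold Matrix.charpoly
    rw [AlgHom.map_det, ← Matrix.coe_detMonoidHom,
      ← (Matrix.detMonoidHom : Matrix (Fin d) (Fin d) k[X] →* k[X]).map_pow]
    apply congr_arg Matrix.det
    refine matPolyEquiv.injective ?_
    rw [map_pow, Matrix.matPolyEquiv_charmatrix]
    have := sub_pow_char_of_commute (p := ℓ) (R := (Matrix (Fin d) (Fin d) k)[X])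
      (x := X) (y := C M) (C M).commute_X
    rw [this, ← C_pow]
    exact (id (matPolyEquiv_eq_X_pow_sub_C ℓ M) :)
  rw [Matrix.trace_eq_neg_charpoly_coeff, Matrix.trace_eq_neg_charpoly_coeff]
  have h2 := congrArg (fun p => p.coeff ((Fintype.card (Fin d) - 1) * ℓ)) key
  beta_reduce at h2
  rw [coeff_expand_mul hl, ← map_frobenius_expand ℓ, coeff_map, coeff_expand_mul hl] at h2
  rw [h2, frobenius_def]
  have := map_neg (frobenius k ℓ) (M.charpoly.coeff (Fintype.card (Fin d) - 1))
  simpa [frobenius_def] using this.symm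

theorem P2.exists_rep {k : Type} [Field k] [IsAlgClosed k] {R : Type} [Ring R] [Algebra k R]
    [FiniteDimensional k R] (b : R) (hb : IsCentralIdem b) (hb0 : b ≠ 0) :
    ∃ (d : ℕ) (_ : NeZero d) (ρ : R →ₐ[k] Matrix (Fin d) (Fin d) k),
      Function.Surjective ρ ∧ ρ b = 1 := by
  have : IsArtinianRing R := IsArtinianRing.of_finite k R
  obtain ⟨n, d, hd, ⟨e⟩⟩ :=
    IsSemisimpleRing.exists_algEquiv_pi_matrix_of_isAlgClosed k (R ⧸ Ring.jacobson R)
  let q : R →ₐ[k] (R ⧸ Ring.jacobson R) := Ideal.Quotient.mkₐ k (Ring.jacobson R)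
  have hq : Function.Surjective q := Ideal.Quotient.mkₐ_surjective k _
  have hqb : q b ≠ 0 := by
    intro h
    have hmem : b ∈ Ring.jacobson R := Ideal.Quotient.eq_zero_iff_mem.1 h
    obtain ⟨N, hN⟩ := IsSemiprimaryRing.isNilpotent (R := R)
    have h1 : ∀ m, b ^ (m+1) = b := by
      intro m
      induction m with
      | zero => simp
      | succ m ih => rw [pow_succ, ih, hb.2]
    have h2 : b ^ N ∈ (Ring.jacobson R) ^ N := Ideal.pow_mem_pow hmem N
    have h3 : b ^ N = 0 := by
      rw [hN] at h2
      simpa using h2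
    apply hb0
    rw [← h1 N, pow_succ, h3, zero_mul]
  have hc : e (q b) ≠ 0 := by simpa using hqb
  obtain ⟨i, hi⟩ : ∃ i, e (q b) i ≠ 0 := by
    by_contra! h
    exact hc (funext h)
  let ρ : R →ₐ[k] Matrix (Fin (d i)) (Fin (d i)) k :=
    (Pi.evalAlgHom k (fun i => Matrix (Fin (d i)) (Fin (d i)) k) i).comp (e.toAlgHom.comp q)
  have hρ : Function.Surjective ρ := by
    intro M
    obtain ⟨x, hx⟩ := hq (e.symm (Pi.single i M))
    exact ⟨x, by simp [ρ, hx]⟩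
  refine ⟨d i, hd i, ρ, hρ, ?_⟩
  have hρb : ρ b ≠ 0 := hi
  have hcen : ρ b ∈ Set.center (Matrix (Fin (d i)) (Fin (d i)) k) := by
    rw [Semigroup.mem_center_iff]
    intro M
    obtain ⟨x, rfl⟩ := hρ M
    rw [← map_mul, ← map_mul, hb.1 x]
  rw [Matrix.center_eq_scalar_image] at hcen
  obtain ⟨c, -, hc⟩ := hcen
  have h2 : ρ b * ρ b = ρ b := by rw [← map_mul, hb.2]
  rw [← hc, ← map_mul] at h2
  have : NeZero (d i) := hd i
  have h3 : c * c = c := Matrix.scalar_inj.1 h2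
  have hc0 : c ≠ 0 := by
    rintro rfl
    apply hρb
    rw [← hc, map_zero]
  have : c = 1 := by simpa [hc0] using h3
  rw [← hc, this, map_one]

theorem P2.trace_ne_neg {k : Type} [Field k] (h2 : (2 : k) ≠ 0) {R : Type} [Ring R] [Algebra k R]
    {d : ℕ} [NeZero d] (ρ ρ' : R →ₐ[k] Matrix (Fin d) (Fin d) k)
    (hρ : Function.Surjective ρ) (hρ' : Function.Surjective ρ') :
    ∃ x, (ρ x).trace + (ρ' x).trace ≠ 0 := by
  by_contra! h
  have hk : ∀ x, ρ x = 0 ↔ ρ' x = 0 := by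
    intro x
    constructor
    · intro hx
      rw [Matrix.ext_iff_trace_mul_right]
      intro M
      obtain ⟨y, rfl⟩ := hρ' M
      have := h (x * y)
      rw [map_mul, hx, zero_mul, Matrix.trace_zero, zero_add, map_mul] at this
      simpa using this
    · intro hx
      rw [Matrix.ext_iff_trace_mul_right]
      intro M
      obtain ⟨y, rfl⟩ := hρ M
      have := h (x * y)
      rw [map_mul, map_mul, hx, zero_mul, Matrix.trace_zero, add_zero] at this
      simpa using this
  have hk' : ∀ x y, ρ x = ρ y → ρ' x = ρ' y := by
    intro x y hxy
    rw [← sub_eq_zero, ← map_sub, ← hk, map_sub, hxy, sub_self]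
  have hk'' : ∀ x y, ρ' x = ρ' y → ρ x = ρ y := by
    intro x y hxy
    rw [← sub_eq_zero, ← map_sub, hk, map_sub, hxy, sub_self]
  let s := Function.surjInv hρ
  have hs : ∀ M, ρ (s M) = M := Function.surjInv_eq hρ
  let α : Matrix (Fin d) (Fin d) k →ₐ[k] Matrix (Fin d) (Fin d) k :=
    { toFun := fun M => ρ' (s M)
      map_one' := by exact (hk' _ 1 (by rw [hs, map_one])).trans (map_one ρ')
      map_zero' := by exact (hk' _ 0 (by rw [hs, map_zero])).trans (map_zero ρ')
      map_mul' := fun M N => by rw [← map_mul ρ']; apply hk'; simp only [hs, map_mul]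
      map_add' := fun M N => by rw [← map_add ρ']; apply hk'; simp only [hs, map_add]
      commutes' := fun c => by
        exact (hk' _ (algebraMap k R c) (by rw [hs, AlgHom.commutes ρ])).trans
          (AlgHom.commutes ρ' c) }
  have hα : ∀ x, α (ρ x) = ρ' x := fun x => hk' _ _ (hs _)
  have hbij : Function.Bijective α := by
    constructor
    · intro M N h
      rw [← hs M, ← hs N]
      exact hk'' _ _ h
    · intro M
      obtain ⟨x, rfl⟩ := hρ' M
      exact ⟨ρ x, hα x⟩
  let A := AlgEquiv.ofBijective α hbij
  let t := Matrix.toLinAlgEquiv' (R := k) (n := Fin d)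
  obtain ⟨T, hT⟩ := AlgEquiv.eq_linearEquivConjAlgEquiv ((t.symm.trans A).trans t)
  have htr : ∀ M, (α M).trace = M.trace := by
    intro M
    have h1 := congrArg (fun f => LinearMap.trace k _ (f (t M))) hT
    simp only [AlgEquiv.trans_apply, AlgEquiv.symm_apply_apply, LinearEquiv.conjAlgEquiv_apply] at h1
    have h3 := LinearMap.trace_conj' (t M) T
    have e1 : ∀ N, LinearMap.trace k _ (t N) = N.trace := fun N => Matrix.trace_toLin'_eq N
    rw [e1] at h1 h3
    rw [← h3]
    exact h1
  obtain ⟨x, hx⟩ := hρ (Matrix.single 0 0 1)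
  have := h x
  rw [← hα, htr, hx] at this
  simp at this
  apply h2
  rw [← this]; norm_num
end P2a

section P2b

theorem P2.block_eq {R : Type} [Ring R] {b c : R} (hb : IsBlock b) (hc : IsBlock c)
    (h : b * c ≠ 0) : b = c := by
  have aux : ∀ {b c : R}, IsBlock b → IsBlock c → b * c ≠ 0 → b = b * c := by
    intro b c hb hc h
    have bc := hb.1.1 c
    have cc := hc.1.2
    have bb := hb.1.2
    have h1 : IsCentralIdem (b * c) := by
      refine ⟨fun x => ?_, ?_⟩
      · rw [mul_assoc, hc.1.1, ← mul_assoc, hb.1.1, mul_assoc]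
      · rw [mul_assoc, ← mul_assoc c, ← bc, mul_assoc, cc, ← mul_assoc, bb]
    have h2 : IsCentralIdem (b - b * c) := by
      refine ⟨fun x => ?_, ?_⟩
      · rw [sub_mul, mul_sub, h1.1, hb.1.1]
      · rw [sub_mul, mul_sub, mul_sub, bb, h1.2, ← h1.1 b, mul_assoc b c b, ← bc, ← mul_assoc, bb]
        simp
    have h3 : (b * c) * (b - b * c) = 0 := by
      rw [mul_sub, h1.2, h1.1, ← mul_assoc, bb, sub_self]
    rcases hb.2.2 _ _ h1 h2 h3 (by abel) with h4 | h4
    · exact absurd h4 h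
    · exact sub_eq_zero.1 h4
  have h1 := aux hb hc h
  have h2 := aux hc hb (by rwa [← hb.1.1])
  rw [h1, hb.1.1, ← h2]

theorem P2.block_map {R : Type} [Ring R] {b : R} (hb : IsBlock b) (s : R ≃+* R) :
    IsBlock (s b) := by
  have hci : ∀ (s : R ≃+* R) c, IsCentralIdem c → IsCentralIdem (s c) := by
    intro s c hc
    refine ⟨fun x => ?_, by rw [← map_mul, hc.2]⟩
    obtain ⟨y, rfl⟩ := s.surjective x
    rw [← map_mul, ← map_mul, hc.1]
  refine ⟨hci s b hb.1, by simpa using hb.2.1, ?_⟩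
  intro c d hc hd hcd h
  have := hb.2.2 (s.symm c) (s.symm d) (hci _ _ hc) (hci _ _ hd) (by rw [← map_mul, hcd, map_zero])
    (by rw [← map_add, ← h]; simp)
  simpa using this

variable {ℓ : ℕ} [Fact ℓ.Prime] {k : Type} [Field k] [IsAlgClosed k] [CharP k ℓ]
  {G : Type} [Group G] [Fintype G]

variable (ℓ k G) in
noncomputable def P2.sig : MonoidAlgebra k G ≃+* MonoidAlgebra k G :=
  MonoidAlgebra.mapRingEquiv G (frobeniusEquiv k ℓ)

theorem P2.sig_single (g : G) (c : k) :
    P2.sig ℓ k G (MonoidAlgebra.single g c) = MonoidAlgebra.single g (c ^ ℓ) := by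
  simp [P2.sig, frobenius_def]

theorem P2.sig_smul (c : k) (x : MonoidAlgebra k G) :
    P2.sig ℓ k G (c • x) = c ^ ℓ • P2.sig ℓ k G x := by
  induction x using MonoidAlgebra.induction_linear with
  | zero => simp
  | add x y hx hy => rw [smul_add, map_add, hx, hy, map_add, smul_add]
  | single g d => simp [P2.sig_single, mul_pow]

variable (k) in
noncomputable def P2.tauHom (sg : G →* ℤˣ) : MonoidAlgebra k G →ₐ[k] MonoidAlgebra k G :=
  MonoidAlgebra.lift k (MonoidAlgebra k G) G
    { toFun := fun g => MonoidAlgebra.single g (((sg g : ℤ) : k))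
      map_one' := by simp [MonoidAlgebra.one_def]
      map_mul' := fun g h => by simp [MonoidAlgebra.single_mul_single] }

theorem P2.tauHom_single (sg : G →* ℤˣ) (g : G) (c : k) :
    P2.tauHom k sg (MonoidAlgebra.single g c) = MonoidAlgebra.single g (c * ((sg g : ℤ) : k)) := by
  simp [P2.tauHom]

theorem P2.tauHom_tauHom (sg : G →* ℤˣ) (x : MonoidAlgebra k G) :
    P2.tauHom k sg (P2.tauHom k sg x) = x := by
  induction x using MonoidAlgebra.induction_linear with
  | zero => simp
  | add x y hx hy => rw [map_add, map_add, hx, hy]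
  | single g d =>
    rw [P2.tauHom_single, P2.tauHom_single, mul_assoc]
    rcases Int.units_eq_one_or (sg g) with h | h <;> simp [h]

variable (k) in
noncomputable def P2.tau (sg : G →* ℤˣ) : MonoidAlgebra k G ≃ₐ[k] MonoidAlgebra k G :=
  AlgEquiv.ofAlgHom (P2.tauHom k sg) (P2.tauHom k sg)
    (AlgHom.ext fun x => P2.tauHom_tauHom sg x) (AlgHom.ext fun x => P2.tauHom_tauHom sg x)

theorem P2.tau_single (sg : G →* ℤˣ) (g : G) (c : k) :
    P2.tau k sg (MonoidAlgebra.single g c) = MonoidAlgebra.single g (c * ((sg g : ℤ) : k)) :=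
  P2.tauHom_single sg g c

theorem P2.tau_tau (sg : G →* ℤˣ) (x : MonoidAlgebra k G) :
    P2.tau k sg (P2.tau k sg x) = x := P2.tauHom_tauHom sg x

theorem P2.tau_sig (sg : G →* ℤˣ) (x : MonoidAlgebra k G) :
    P2.tau k sg (P2.sig ℓ k G x) = P2.sig ℓ k G (P2.tau k sg x) := by
  induction x using MonoidAlgebra.induction_linear with
  | zero => simp
  | add x y hx hy => simp only [map_add, hx, hy]
  | single g d =>
    rw [P2.sig_single, P2.tau_single, P2.tau_single, P2.sig_single, mul_pow]
    congr 2
    rcases Int.units_eq_one_or (sg g) with h | h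
    · simp [h]
    · have := map_neg (frobenius k ℓ) 1
      simp [frobenius_def] at this
      simp [h, this]

theorem P2.theta_sig (θ : MonoidAlgebra k G →ₗ[k] k)
    (h : ∀ g, θ (MonoidAlgebra.single g 1) ^ ℓ = θ (MonoidAlgebra.single g 1))
    (x : MonoidAlgebra k G) : θ (P2.sig ℓ k G x) = θ x ^ ℓ := by
  induction x using MonoidAlgebra.induction_linear with
  | zero => simp [(Fact.out : ℓ.Prime).ne_zero]
  | add x y hx hy => rw [map_add, map_add, hx, hy, map_add, add_pow_char]
  | single g d =>
    rw [P2.sig_single]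
    have e : ∀ c : k, MonoidAlgebra.single g c = c • MonoidAlgebra.single g (1 : k) := by simp
    rw [e d, e (d ^ ℓ), map_smul, map_smul, smul_eq_mul, smul_eq_mul, mul_pow, h]

theorem P2.key (θ : MonoidAlgebra k G →ₗ[k] k)
    (h : ∀ g, θ (MonoidAlgebra.single g 1) ^ ℓ = θ (MonoidAlgebra.single g 1))
    (h0 : ∃ x, θ x ≠ 0) (e : MonoidAlgebra k G) (he : ∀ x, θ (e * x) = θ x) :
    e * P2.sig ℓ k G e ≠ 0 := by
  intro h1
  obtain ⟨y, hy⟩ := h0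
  obtain ⟨x, rfl⟩ := (P2.sig ℓ k G).surjective y
  apply hy
  rw [P2.theta_sig θ h, ← he x, ← P2.theta_sig θ h, map_mul, ← he, ← mul_assoc, h1]
  simp

theorem P2.coprime_pow (g : G) : ∃ m : ℕ, ℓ.Coprime (orderOf (g ^ (ℓ ^ m))) := by
  have hp : ℓ.Prime := Fact.out
  obtain ⟨m, r, hr, h⟩ := Nat.exists_eq_pow_mul_and_not_dvd (orderOf_pos g).ne' ℓ hp.ne_one
  refine ⟨m, ?_⟩
  rw [orderOf_pow_of_dvd (pow_pos hp.pos m).ne' (by rw [h]; exact Dvd.intro _ rfl), h,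
    Nat.mul_div_cancel_left _ (pow_pos hp.pos m)]
  exact (Nat.Prime.coprime_iff_not_dvd hp).2 hr

theorem P2.main (z : G) (hz : ∀ g, z * g = g * z) (hzz : z * z = 1) (sg : G →* ℤˣ)
    (H1 : ∀ g : G, ℓ.Coprime (orderOf g) → ∃ u, u * g * u⁻¹ = g ^ ℓ ∨ u * g * u⁻¹ = z * g ^ ℓ)
    (H2 : ℓ ≠ 2 → ∀ g : G, ℓ.Coprime (orderOf g) → sg g = 1 →
      (∃ u, u * g * u⁻¹ = g ^ ℓ) ∨ (∃ u, u * g * u⁻¹ = z * g))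
    (b : MonoidAlgebra k G) (hb : IsBlock b) :
    ∃ s : MonoidAlgebra k G ≃+* MonoidAlgebra k G, (∀ (c : k) x, s (c • x) = c ^ ℓ • s x) ∧
      s b = b := by
  have hp : ℓ.Prime := Fact.out
  obtain ⟨d, hd, ρ, hρ, hρb⟩ := P2.exists_rep (k := k) b hb.1 hb.2.1
  let S : G →* MonoidAlgebra k G := MonoidAlgebra.of k G
  let χ : MonoidAlgebra k G →ₗ[k] k := (Matrix.traceLinearMap (Fin d) k k) ∘ₗ ρ.toLinearMap
  have hχ : ∀ x, χ x = (ρ x).trace := fun x => rfl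
  have hχS : ∀ (g : G) (m : ℕ), χ (S (g ^ (ℓ ^ m))) = χ (S g) ^ (ℓ ^ m) := by
    intro g m
    induction m with
    | zero => simp
    | succ m ih => rw [pow_succ, pow_mul, pow_mul, ← ih, hχ, map_pow, map_pow, P2.trace_pow, ← hχ]
  have hχ1 : ∀ (g : G), χ (S (g ^ ℓ)) = χ (S g) ^ ℓ := by
    intro g
    have := hχS g 1
    simpa using this
  have hconj : ∀ u g : G, χ (S (u * g * u⁻¹)) = χ (S g) := by
    intro u g
    rw [hχ, hχ, map_mul, map_mul, Matrix.trace_mul_comm, ← map_mul, ← map_mul]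
    congr 3
    group
  have hred : ∀ g : G, (∀ m, ℓ.Coprime (orderOf (g ^ (ℓ ^ m))) →
      χ (S (g ^ (ℓ ^ m))) ^ ℓ = χ (S (g ^ (ℓ ^ m)))) → χ (S g) ^ ℓ = χ (S g) := by
    intro g h
    obtain ⟨m, hm⟩ := P2.coprime_pow (ℓ := ℓ) g
    have h1 := h m hm
    rw [hχS, ← pow_mul, mul_comm, pow_mul] at h1
    exact iterateFrobenius_inj k ℓ m (by simpa [iterateFrobenius_def] using h1)
  have hχ0 : ∃ x, χ x ≠ 0 := by
    obtain ⟨x, hx⟩ := hρ (Matrix.single 0 0 1)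
    exact ⟨x, by rw [hχ, hx]; simp⟩
  have hχb : ∀ x, χ (b * x) = χ x := by
    intro x; rw [hχ, hχ, map_mul, hρb, one_mul]
  -- the scalar of z
  have hzc : ρ (S z) = 1 ∨ ρ (S z) = -1 := by
    have hcen : ρ (S z) ∈ Set.center (Matrix (Fin d) (Fin d) k) := by
      rw [Semigroup.mem_center_iff]
      intro M
      obtain ⟨x, rfl⟩ := hρ M
      rw [← map_mul, ← map_mul]
      congr 1
      induction x using MonoidAlgebra.induction_linear with
      | zero => simp
      | add x y hx hy => rw [add_mul, mul_add, hx, hy]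
      | single g c => simp [S, MonoidAlgebra.single_mul_single, hz]
    rw [Matrix.center_eq_scalar_image] at hcen
    obtain ⟨c, -, hc⟩ := hcen
    have h2 : ρ (S z) * ρ (S z) = 1 := by rw [← map_mul, ← map_mul, hzz, map_one, map_one]
    rw [← hc, ← map_mul, ← map_one (Matrix.scalar (Fin d))] at h2
    have h3 : c * c = 1 := Matrix.scalar_inj.1 h2
    rcases mul_self_eq_one_iff.1 h3 with h | h
    · left; rw [← hc, h, map_one]
    · right; rw [← hc, h, map_neg, map_one]
  by_cases hz1 : ρ (S z) = 1
  · have hzg : ∀ g, χ (S (z * g)) = χ (S g) := by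
      intro g
      rw [hχ, hχ, map_mul, map_mul, hz1, one_mul]
    have h : ∀ g, χ (S g) ^ ℓ = χ (S g) := by
      intro g
      refine hred g fun m hm => ?_
      obtain ⟨u, hu | hu⟩ := H1 _ hm
      · rw [← hχ1, ← hu, hconj]
      · rw [← hχ1, ← hzg, ← hu, hconj]
    have h1 := P2.key χ h hχ0 b hχb
    exact ⟨P2.sig ℓ k G, P2.sig_smul, (P2.block_eq hb (P2.block_map hb _) h1).symm⟩
  · have hzm : ρ (S z) = -1 := hzc.resolve_left hz1
    have h2 : (2 : k) ≠ 0 := by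
      intro h2
      apply hz1
      rw [hzm]
      have h1 : (-1 : k) = 1 := by linear_combination -h2
      ext i j
      by_cases hij : i = j <;> simp [hij, h1, Matrix.one_apply]
    have hl2 : ℓ ≠ 2 := by
      rintro rfl
      exact h2 (by exact_mod_cast CharP.cast_eq_zero k 2)
    have hzg : ∀ g, χ (S (z * g)) = - χ (S g) := by
      intro g
      rw [hχ, hχ, map_mul, map_mul, hzm, neg_mul, one_mul, Matrix.trace_neg]
    have h : ∀ g, sg g = 1 → χ (S g) ^ ℓ = χ (S g) := by
      intro g hg
      refine hred g fun m hm => ?_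
      rcases H2 hl2 _ hm (by rw [map_pow, hg, one_pow]) with ⟨u, hu⟩ | ⟨u, hu⟩
      · rw [← hχ1, ← hu, hconj]
      · have : χ (S (g ^ ℓ ^ m)) = 0 := by
          have h1 := hconj u (g ^ ℓ ^ m)
          rw [hu, hzg] at h1
          have h3 : 2 * χ (S (g ^ ℓ ^ m)) = 0 := by linear_combination -h1
          simpa [h2] using h3
        rw [this, zero_pow hp.ne_zero]
    let t := P2.tau k sg
    let θ : MonoidAlgebra k G →ₗ[k] k := χ + χ ∘ₗ t.toLinearMap
    have hθ : ∀ x, θ x = χ x + χ (t x) := fun x => rfl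
    have hθ0 : ∃ x, θ x ≠ 0 :=
      P2.trace_ne_neg h2 ρ (ρ.comp t.toAlgHom) hρ (hρ.comp t.surjective)
    have hF : ((2 : k)) ^ ℓ = 2 := by
      have := map_ofNat (frobenius k ℓ) 2
      simpa [frobenius_def] using this
    have hθg : ∀ g, θ (S g) ^ ℓ = θ (S g) := by
      intro g
      rcases Int.units_eq_one_or (sg g) with hg | hg
      · have e : θ (S g) = 2 * χ (S g) := by
          rw [hθ]
          simp only [t, S, MonoidAlgebra.of_apply, P2.tau_single, hg]
          simp [two_mul]
        rw [e, mul_pow, h g hg, hF]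
      · have e : θ (S g) = 0 := by
          rw [hθ]
          simp only [t, S, MonoidAlgebra.of_apply, P2.tau_single, hg]
          simp [MonoidAlgebra.single_neg]
        rw [e, zero_pow hp.ne_zero]
    have hbt : IsBlock (t b) := P2.block_map hb t.toRingEquiv
    have tt : ∀ x, t (t x) = x := P2.tau_tau sg
    have ts : ∀ x, t (P2.sig ℓ k G x) = P2.sig ℓ k G (t x) := P2.tau_sig sg
    have c1 : P2.sig ℓ k G b = b → ∃ s : MonoidAlgebra k G ≃+* MonoidAlgebra k G,
      (∀ (c : k) x, s (c • x) = c ^ ℓ • s x) ∧ s b = b := fun h => ⟨_, P2.sig_smul, h⟩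
    have c2 : P2.sig ℓ k G (t b) = b → ∃ s : MonoidAlgebra k G ≃+* MonoidAlgebra k G,
      (∀ (c : k) x, s (c • x) = c ^ ℓ • s x) ∧ s b = b := fun h =>
        ⟨t.toRingEquiv.trans (P2.sig ℓ k G), fun c x => by
          change P2.sig ℓ k G (t (c • x)) = c ^ ℓ • P2.sig ℓ k G (t x)
          rw [map_smul, P2.sig_smul], h⟩
    have hbs := P2.block_map hb (P2.sig ℓ k G)
    have hbts := P2.block_map hbt (P2.sig ℓ k G)
    by_cases hbb : b * t b = 0
    · have hbb' : t b * b = 0 := by rw [← hb.1.1, hbb]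
      have he : ∀ x, θ ((b + t b) * x) = θ x := by
        intro x
        rw [hθ, hθ, map_mul t, map_add t, tt]
        congr 1
        · rw [← hχb, ← mul_assoc, mul_add, hbb, hb.1.2, add_zero, hχb]
        · rw [← hχb, ← mul_assoc, mul_add, hbb, hb.1.2, zero_add, hχb]
      have h1 := P2.key θ hθg hθ0 _ he
      by_cases a1 : b * P2.sig ℓ k G b = 0
      · by_cases a2 : b * P2.sig ℓ k G (t b) = 0
        · by_cases a3 : t b * P2.sig ℓ k G b = 0
          · by_cases a4 : t b * P2.sig ℓ k G (t b) = 0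
            · exfalso; apply h1
              rw [map_add, add_mul, mul_add, mul_add, a1, a2, a3, a4]; simp
            · apply c1
              have := P2.block_eq hbt hbts a4
              rw [← ts] at this
              exact (t.injective this).symm
          · apply c2
            rw [← ts, ← P2.block_eq hbt hbs a3, tt]
        · exact c2 (P2.block_eq hb hbts a2).symm
      · exact c1 (P2.block_eq hb hbs a1).symm
    · have e := P2.block_eq hb hbt hbb
      have he : ∀ x, θ (b * x) = θ x := by
        intro x
        rw [hθ, hθ, map_mul t, ← e, hχb, hχb]
      have h1 := P2.key θ hθg hθ0 b he
      exact c1 (P2.block_eq hb hbs h1).symm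
end P2b

section P3a
open Equiv Equiv.Perm

theorem P3.cycleType_pow {n : ℕ} (s : Perm (Fin n)) (m : ℕ) :
    m.Coprime (orderOf s) → (s ^ m).cycleType = s.cycleType := by
  induction s using Equiv.Perm.cycle_induction_on with
  | base_one => simp
  | base_cycles s hs =>
    intro h
    have hc : (s ^ m).IsCycle := (hs.pow_iff).2 h
    rw [hc.cycleType, hs.cycleType, support_pow_coprime h]
  | induction_disjoint s t hd hs ih1 ih2 =>
    intro h
    rw [hd.orderOf] at h
    have h1 := ih1 (Nat.Coprime.coprime_dvd_right (Nat.dvd_lcm_left _ _) h)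
    have h2 := ih2 (Nat.Coprime.coprime_dvd_right (Nat.dvd_lcm_right _ _) h)
    rw [hd.commute.mul_pow, (hd.pow_disjoint_pow m m).cycleType_mul, hd.cycleType_mul, h1, h2]

structure P3.Cov {n : ℕ} {G : Type} [Group G] (π : G →* Perm (Fin n)) (z : G) : Prop where
  surj : Function.Surjective π
  ker : ∀ g, π g = 1 → g = 1 ∨ g = z
  pz : π z = 1
  zz : z * z = 1
  z1 : z ≠ 1
  zc : ∀ g, z * g = g * z

variable {n : ℕ} {G : Type} [Group G] {π : G →* Perm (Fin n)} {z : G}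

theorem P3.Cov.eq_or (H : P3.Cov π z) {g h : G} (e : π g = π h) : g = h ∨ g = z * h := by
  rcases H.ker (g * h⁻¹) (by rw [map_mul, map_inv, e, mul_inv_cancel]) with h1 | h1
  · left; exact mul_inv_eq_one.1 h1
  · right; exact mul_inv_eq_iff_eq_mul.1 h1

theorem P3.H1 (H : P3.Cov π z) {ℓ : ℕ} (g : G) (hg : ℓ.Coprime (orderOf g)) :
    ∃ u, u * g * u⁻¹ = g ^ ℓ ∨ u * g * u⁻¹ = z * g ^ ℓ := by
  have h1 := P3.cycleType_pow (π g) ℓ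
    (Nat.Coprime.coprime_dvd_right (orderOf_map_dvd π g) hg)
  obtain ⟨c, hc⟩ := isConj_iff.1 (isConj_iff_cycleType_eq.2 h1.symm)
  obtain ⟨u, rfl⟩ := H.surj c
  exact ⟨u, H.eq_or (by rw [map_mul, map_mul, map_inv, hc, map_pow])⟩

/-- sign rule for lifts of disjoint permutations -/
theorem P3.sign_rule (H : P3.Cov π z) (E : G) (hE : ∀ x, E * x = x * E) (hEE : E * E = 1) (g : G)
    (hg : ∀ h a b, a ≠ b → π h = swap a b → π g a = a → π g b = b → h * g = E * (g * h))
    (h : G) (hd : (π h).Disjoint (π g)) :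
    (sign (π h) = 1 → h * g = g * h) ∧ (sign (π h) = -1 → h * g = E * (g * h)) := by
  have key : ∀ p : Perm {i // π g i = i}, ∀ h, π h = ofSubtype p →
      (sign (π h) = 1 → h * g = g * h) ∧ (sign (π h) = -1 → h * g = E * (g * h)) := by
    intro p
    induction p using Equiv.Perm.swap_induction_on with
    | one =>
      intro h hh
      rw [map_one] at hh
      rw [hh]
      refine ⟨fun _ => ?_, fun h1 => ?_⟩
      · rcases H.ker h hh with rfl | rfl
        · simp
        · exact H.zc g
      · rw [Equiv.Perm.sign_one] at h1
        exact absurd h1 (by decide)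
    | swap_mul f x y hxy ih =>
      intro h hh
      rw [map_mul, ofSubtype_swap_eq] at hh
      have hxy' : (x : Fin n) ≠ y := fun e => hxy (Subtype.ext e)
      obtain ⟨t, ht⟩ := H.surj (swap (x : Fin n) y)
      have e1 : π (t⁻¹ * h) = ofSubtype f := by rw [map_mul, map_inv, hh, ht]; simp
      obtain ⟨i1, i2⟩ := ih _ e1
      have h3 := hg t x y hxy' ht x.2 y.2
      have hs : sign (π h) = - sign (π (t⁻¹ * h)) := by
        rw [e1, hh, map_mul, sign_swap hxy', neg_one_mul]
      have hh2 : h = t * (t⁻¹ * h) := by simp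
      generalize t⁻¹ * h = r at *
      refine ⟨fun h1 => ?_, fun h1 => ?_⟩
      · have := i2 (by rw [← neg_neg (sign _), ← hs, h1])
        rw [hh2, mul_assoc, this, ← mul_assoc, ← hE, mul_assoc, ← mul_assoc t, h3,
          ← mul_assoc, ← mul_assoc, hEE, one_mul, mul_assoc]
      · have := i1 (by rw [← neg_neg (sign _), ← hs, h1, neg_neg])
        rw [hh2, mul_assoc, this, ← mul_assoc, h3, mul_assoc, mul_assoc]
  have h1 : ∀ x, π g (π h x) = π h x ↔ π g x = x := by
    intro x
    by_cases hx : π h x = x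
    · rw [hx]
    · have a1 := (hd x).resolve_left hx
      have a2 := (hd (π h x)).resolve_left (fun e => hx ((π h).injective e))
      simp [a1, a2]
  exact key (subtypePerm (π h) h1) h
    (ofSubtype_subtypePerm h1 fun x hx => (hd x).resolve_left hx).symm

theorem P3.swap_pair (H : P3.Cov π z) (E : G) (hE : ∀ x, E * x = x * E) {h₁ h₂ k₁ k₂ : G}
    {a b c d a' b' c' d' : Fin n} (inj : Function.Injective ![a, b, c, d])
    (inj' : Function.Injective ![a', b', c', d'])
    (e1 : π h₁ = swap a b) (e2 : π h₂ = swap c d)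
    (f1 : π k₁ = swap a' b') (f2 : π k₂ = swap c' d')
    (h : h₁ * h₂ = E * (h₂ * h₁)) : k₁ * k₂ = E * (k₂ * k₁) := by
  have := Equiv.Perm.isMultiplyPretransitive (Fin n) 4
  obtain ⟨p, hp⟩ := MulAction.exists_smul_eq (Perm (Fin n))
    (⟨_, inj⟩ : Fin 4 ↪ Fin n) ⟨_, inj'⟩
  have pp : ∀ i, p (![a, b, c, d] i) = ![a', b', c', d'] i := fun i =>
    congrArg (fun f : Fin 4 ↪ Fin n => f i) hp
  have p0 : p a = a' := pp 0
  have p1 : p b = b' := pp 1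
  have p2 : p c = c' := pp 2
  have p3 : p d = d' := pp 3
  obtain ⟨u, rfl⟩ := H.surj p
  have g1 : π k₁ = π (u * h₁ * u⁻¹) := by
    rw [f1, map_mul, map_mul, map_inv, e1, ← p0, ← p1, ← swap_apply_apply, swap_comm]
    try simp [swap_comm]
  have g2 : π k₂ = π (u * h₂ * u⁻¹) := by
    rw [f2, map_mul, map_mul, map_inv, e2, ← p2, ← p3, ← swap_apply_apply, swap_comm]
    try simp [swap_comm]
  have base : (u * h₁ * u⁻¹) * (u * h₂ * u⁻¹) = E * ((u * h₂ * u⁻¹) * (u * h₁ * u⁻¹)) := by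
    calc (u * h₁ * u⁻¹) * (u * h₂ * u⁻¹) = u * (h₁ * h₂) * u⁻¹ := by group
      _ = (u * E) * (h₂ * h₁) * u⁻¹ := by rw [h]; group
      _ = (E * u) * (h₂ * h₁) * u⁻¹ := by rw [hE]
      _ = _ := by group
  have zl : ∀ x y : G, x * (z * y) = z * (x * y) := by
    intro x y; rw [← mul_assoc, ← H.zc, mul_assoc]
  have zl' : ∀ x y : G, z * x * y = z * (x * y) := fun x y => mul_assoc _ _ _
  generalize u * h₁ * u⁻¹ = x at *
  generalize u * h₂ * u⁻¹ = y at *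
  rcases H.eq_or g1 with rfl | rfl <;> rcases H.eq_or g2 with rfl | rfl <;>
    simp only [zl, zl', base]

theorem P3.anti (H : P3.Cov π z)
    (hC : ∀ t a b, a ≠ b → π t = swap a b → ∃ u, u * t * u⁻¹ = z * t)
    {h₁ h₂ : G} {a b c d : Fin n} (inj : Function.Injective ![a, b, c, d])
    (e1 : π h₁ = swap a b) (e2 : π h₂ = swap c d) : h₁ * h₂ = z * (h₂ * h₁) := by
  have ab : a ≠ b := fun h => by have := @inj 0 1 h; exact absurd this (by decide)
  have ac : a ≠ c := fun h => by have := @inj 0 2 h; exact absurd this (by decide)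
  have ad : a ≠ d := fun h => by have := @inj 0 3 h; exact absurd this (by decide)
  have bc : b ≠ c := fun h => by have := @inj 1 2 h; exact absurd this (by decide)
  have bd : b ≠ d := fun h => by have := @inj 1 3 h; exact absurd this (by decide)
  have hdis : (swap a b).Disjoint (swap c d) := by
    intro x
    by_cases xa : x = a
    · right; subst xa; exact swap_apply_of_ne_of_ne ac ad
    · by_cases xb : x = b
      · right; subst xb; exact swap_apply_of_ne_of_ne bc bd
      · left; exact swap_apply_of_ne_of_ne xa xb
  rcases H.eq_or (g := h₁ * h₂) (h := h₂ * h₁)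
    (by rw [map_mul, map_mul, e1, e2, hdis.commute.eq]) with h | h
  swap
  · exact h
  exfalso
  have hall : ∀ h a' b', a' ≠ b' → π h = swap a' b' → π h₁ a' = a' → π h₁ b' = b' →
      h * h₁ = 1 * (h₁ * h) := by
    intro h' a' b' hab hh ha hb
    rw [e1] at ha hb
    have key : h₁ * h' = 1 * (h' * h₁) := by
      refine P3.swap_pair H 1 (by simp) inj ?_ e1 e2 e1 hh (by simpa using h)
      have aa' : a ≠ a' := by
        rintro rfl; rw [swap_apply_left] at ha; exact ab ha.symm
      have ba' : b ≠ a' := by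
        rintro rfl; rw [swap_apply_right] at ha; exact ab ha
      have ab' : a ≠ b' := by
        rintro rfl; rw [swap_apply_left] at hb; exact ab hb.symm
      have bb' : b ≠ b' := by
        rintro rfl; rw [swap_apply_right] at hb; exact ab hb
      intro i j hij
      fin_cases i <;> fin_cases j <;> simp_all
    simpa using key.symm
  have hcomm : ∀ u, π u a = a → π u b = b → u * h₁ * u⁻¹ ≠ z * h₁ := by
    intro u ua ub hu
    have hd : (π u).Disjoint (π h₁) := by
      intro x
      rw [e1]
      by_cases xa : x = a
      · left; rw [xa, ua]
      · by_cases xb : x = b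
        · left; rw [xb, ub]
        · right; exact swap_apply_of_ne_of_ne xa xb
    have h3 := P3.sign_rule H 1 (by simp) (by simp) h₁ hall u hd
    have h4 : u * h₁ = h₁ * u := by
      rcases Int.units_eq_one_or (sign (π u)) with h5 | h5
      · exact h3.1 h5
      · simpa using h3.2 h5
    rw [h4, mul_inv_cancel_right] at hu
    exact H.z1 (by simpa using hu.symm)
  obtain ⟨u, hu⟩ := hC h₁ a b ab e1
  have h5 : π u * swap a b * (π u)⁻¹ = swap a b := by
    have := congrArg π hu
    rwa [map_mul, map_mul, map_mul, map_inv, e1, H.pz, one_mul] at this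
  have h6 : swap (π u a) (π u b) = swap a b := by
    rw [← h5]
    exact swap_apply_apply (π u) a b
  have h7 : π u a = a ∨ π u a = b := by
    have := swap_apply_left (π u a) (π u b)
    rw [h6] at this
    by_contra! hne
    rw [swap_apply_of_ne_of_ne hne.1 hne.2] at this
    exact ab ((π u).injective this)
  rcases h7 with h7 | h7
  · have h8 : π u b = b := by
      have := swap_apply_left (π u a) (π u b)
      rw [h6, h7, swap_apply_left] at this
      exact this.symm
    exact hcomm u h7 h8 hu
  · have h8 : π u b = a := by
      have := swap_apply_left (π u a) (π u b)
      rw [h6, h7, swap_apply_right] at this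
      exact this.symm
    refine hcomm (h₁ * u) (by simp [h7, e1]) (by simp [h8, e1]) ?_
    calc h₁ * u * h₁ * (h₁ * u)⁻¹ = h₁ * (u * h₁ * u⁻¹) * h₁⁻¹ := by group
      _ = (h₁ * z) * h₁ * h₁⁻¹ := by rw [hu]; group
      _ = z * h₁ := by rw [← H.zc]; group

theorem P3.caseC (H : P3.Cov π z)
    (hC : ∀ t a b, a ≠ b → π t = swap a b → ∃ u, u * t * u⁻¹ = z * t)
    (g : G) (hg : sign (π g) = 1) (h2 : 2 ∣ orderOf (π g)) : ∃ u, u * g * u⁻¹ = z * g := by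
  -- odd disjoint lifts anticommute
  have step1 : ∀ t h a b, a ≠ b → π t = swap a b → π h a = a → π h b = b → sign (π h) = -1 →
      h * t = z * (t * h) := by
    intro t h a b hab ht ha hb hs
    refine (P3.sign_rule H z H.zc H.zz t ?_ h ?_).2 hs
    · intro h' a' b' hab' hh ha' hb'
      rw [ht] at ha' hb'
      refine P3.anti H hC ?_ hh ht
      have aa' : a ≠ a' := by
        rintro rfl; rw [swap_apply_left] at ha'; exact hab ha'.symm
      have ba' : b ≠ a' := by
        rintro rfl; rw [swap_apply_right] at ha'; exact hab ha'
      have ab' : a ≠ b' := by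
        rintro rfl; rw [swap_apply_left] at hb'; exact hab hb'.symm
      have bb' : b ≠ b' := by
        rintro rfl; rw [swap_apply_right] at hb'; exact hab hb'
      intro i j hij
      fin_cases i <;> fin_cases j <;> simp_all
    · intro x
      rw [ht]
      by_cases xa : x = a
      · left; rw [xa, ha]
      · by_cases xb : x = b
        · left; rw [xb, hb]
        · right; exact swap_apply_of_ne_of_ne xa xb
  have zz' : ∀ x y : G, x = z * y → y = z * x := by
    rintro x y rfl; rw [← mul_assoc, H.zz, one_mul]
  obtain ⟨m, hm, hm2⟩ : ∃ m ∈ (π g).cycleType, 2 ∣ m := by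
    rw [← lcm_cycleType] at h2
    have h3 : (π g).cycleType.lcm ∣ (π g).cycleType.prod :=
      Multiset.lcm_dvd.2 fun b hb => Multiset.dvd_prod hb
    exact Prime.exists_mem_multiset_dvd (Nat.prime_iff.1 Nat.prime_two) (h2.trans h3)
  obtain ⟨c, r, hcr, hd, hcyc, hcard⟩ := mem_cycleType_iff.1 hm
  have hsc : sign c = -1 := by
    rw [hcyc.sign, hcard, (even_iff_two_dvd.2 hm2).neg_one_pow]
  have hsr : sign r = -1 := by
    rw [hcr, map_mul, hsc, neg_one_mul] at hg
    rw [← hg, neg_neg]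
  obtain ⟨u, hu⟩ := H.surj c
  obtain ⟨v, hv⟩ : ∃ v, g = u * v := ⟨u⁻¹ * g, by simp⟩
  have hpv : π v = r := by
    rw [hv, map_mul, hu] at hcr
    exact mul_left_cancel hcr
  have key : u * v = z * (v * u) := by
    refine (P3.sign_rule H z H.zc H.zz v ?_ u (by rw [hu, hpv]; exact hd)).2 (by rw [hu, hsc])
    intro h a b hab hh ha hb
    exact zz' _ _ (step1 h v a b hab hh ha hb (by rw [hpv, hsr]))
  refine ⟨u, ?_⟩
  rw [hv, mul_inv_eq_iff_eq_mul]
  calc u * (u * v) = (u * z) * (v * u) := by rw [key, mul_assoc]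
    _ = z * (u * v) * u := by rw [← H.zc]; group
end P3a

section P3b
open Equiv Equiv.Perm

variable {n : ℕ} {G : Type} [Group G] {π : G →* Perm (Fin n)} {z : G}

/-- a conjugation-stable section over the transpositions -/
structure P3.Sec (π : G →* Perm (Fin n)) (z w : G) (ι : ℂ) (T : G → Prop) : Prop where
  conj : ∀ u x, T x → T (u * x * u⁻¹)
  nz : ∀ x, T x → ¬ T (z * x)
  ex : ∀ a b, a ≠ b → ∃ x, T x ∧ π x = swap a b
  sq : ∀ x, T x → x * x = w
  io : (w = 1 ∧ ι * ι = 1) ∨ (w = z ∧ ι * ι = -1)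

theorem P3.Sec.uniq (H : P3.Cov π z) {w : G} {ι : ℂ} {T : G → Prop} (S : P3.Sec π z w ι T)
    {x y : G} (hx : T x) (hy : T y) (e : π x = π y) : x = y := by
  rcases H.eq_or e with h | h
  · exact h
  · exact absurd (h ▸ hx) (S.nz y hy)

theorem P3.Sec.ind (H : P3.Cov π z) {w : G} {ι : ℂ} {T : G → Prop} (S : P3.Sec π z w ι T)
    (m : ℕ) (hm : m ≤ n) : ∃ φ : G → ℂ, φ 1 = 1 ∧ ∀ g, (∀ i : Fin n, m ≤ i.val → π g i = i) →
      φ (z * g) = - φ g ∧ ∀ x a b, T x → a ≠ b → a.val < m → b.val < m → π x = swap a b →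
        φ (x * g) = ι * φ g := by
  classical
  induction m with
  | zero =>
    refine ⟨fun g => if g = 1 then 1 else -1, by simp, fun g hg => ⟨?_, ?_⟩⟩
    · have h1 : π g = 1 := Equiv.ext fun i => hg i (Nat.zero_le _)
      rcases H.ker g h1 with rfl | rfl
      · simp [H.z1]
      · simp [H.z1, H.zz]
    · intro x a b _ _ ha
      exact absurd ha (Nat.not_lt_zero _)
  | succ m ih =>
    obtain ⟨φ, φ1, hφ⟩ := ih (by omega)
    set M : Fin n := ⟨m, by omega⟩ with hM
    have hτ : ∀ a b : Fin n, ∃ x, a ≠ b → (T x ∧ π x = swap a b) := by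
      intro a b
      by_cases hab : a = b
      · exact ⟨1, fun h => absurd hab h⟩
      · obtain ⟨x, hx⟩ := S.ex a b hab
        exact ⟨x, fun _ => hx⟩
    choose τ hτ using hτ
    let L : ℕ → G → Prop := fun m g => ∀ i : Fin n, m ≤ i.val → π g i = i
    obtain ⟨ψ, hψ⟩ : ∃ ψ : G → ℂ, ∀ g, ψ g =
      if π g M = M then φ g else ι * φ ((τ M (π g M))⁻¹ * g) := ⟨_, fun _ => rfl⟩
    have A : ∀ g, L m g → ψ g = φ g := by
      intro g hg
      rw [hψ, if_pos (hg M le_rfl)]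
    have B : ∀ t h p, T t → p ≠ M → π t = swap M p → L m h → ψ (t * h) = ι * φ h := by
      intro t h p ht hp hpt hh
      have e1 : π (t * h) M = p := by
        rw [map_mul, Perm.mul_apply, hh M le_rfl, hpt, swap_apply_left]
      obtain ⟨k1, k2⟩ := hτ M p hp.symm
      have e2 : τ M p = t := S.uniq H k1 ht (k2.trans hpt.symm)
      rw [hψ, e1, if_neg hp, e2, inv_mul_cancel_left]
    have D : ∀ g, L (m + 1) g → L m g ∨ ∃ t h p, T t ∧ p ≠ M ∧ p.val < m ∧ π t = swap M p ∧
        L m h ∧ g = t * h := by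
      intro g hg
      by_cases hp : π g M = M
      · left
        intro i hi
        rcases Nat.eq_or_lt_of_le hi with h | h
        · have : i = M := Fin.ext h.symm
          rw [this, hp]
        · exact hg i h
      · right
        have plt : (π g M).val < m := by
          by_contra hlt
          have h1 : m ≠ (π g M).val := fun h => hp (Fin.ext h.symm)
          have := hg (π g M) (by omega)
          exact hp ((π g).injective this)
        obtain ⟨k1, k2⟩ := hτ M (π g M) (Ne.symm hp)
        refine ⟨τ M (π g M), (τ M (π g M))⁻¹ * g, π g M, k1, hp, plt, k2, ?_, by simp⟩
        intro i hi
        rw [map_mul, map_inv, k2, swap_inv, Perm.mul_apply]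
        rcases Nat.eq_or_lt_of_le hi with h | h
        · have : i = M := Fin.ext h.symm
          rw [this, swap_apply_right]
        · rw [hg i h]
          refine swap_apply_of_ne_of_ne ?_ ?_
          · rintro rfl
            exact absurd h (lt_irrefl _)
          · intro e
            rw [← e] at plt
            omega
    have Lmul : ∀ x g a b, a.val < m → b.val < m → π x = swap a b → L m g → L m (x * g) := by
      intro x g a b ha hb hx hg i hi
      rw [map_mul, Perm.mul_apply, hg i hi, hx]
      refine swap_apply_of_ne_of_ne ?_ ?_ <;> rintro rfl <;> omega
    have Lz : ∀ g, L m g → L m (z * g) := by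
      intro g hg i hi
      rw [map_mul, H.pz, one_mul, hg i hi]
    have key : ∀ g, L (m + 1) g → ∀ x a b, T x → a ≠ b → a.val < m + 1 → b.val < m →
        π x = swap a b → ψ (x * g) = ι * ψ g := by
      intro g hg x a b hx hab ha hb hxab
      have hbM : b ≠ M := by rintro rfl; exact absurd hb (lt_irrefl _)
      by_cases haM : a = M
      · subst haM
        rcases D g hg with h | ⟨t, h, p, ht, hp, plt, hpt, hh, rfl⟩
        · rw [B x g b hx hbM hxab h, A g h]
        · rw [B t h p ht hp hpt hh]
          by_cases hbp : b = p
          · subst hbp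
            have e : x = t := S.uniq H hx ht (hxab.trans hpt.symm)
            subst e
            rw [← mul_assoc, S.sq x hx, ← mul_assoc]
            rcases S.io with ⟨h1, h2⟩ | ⟨h1, h2⟩
            · rw [h1, h2, one_mul, one_mul, A h hh]
            · rw [h1, h2, A _ (Lz h hh), (hφ h hh).1, neg_one_mul]
          · have hy : T (t⁻¹ * x * t) := by simpa using S.conj t⁻¹ x hx
            have hpy : π (t⁻¹ * x * t) = swap p b := by
              have e0 := swap_apply_apply (swap M p) M b
              rw [swap_apply_left, swap_apply_of_ne_of_ne hbM hbp] at e0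
              rw [map_mul, map_mul, map_inv, hxab, hpt, e0, swap_inv]
            have e1 : x * (t * h) = t * ((t⁻¹ * x * t) * h) := by group
            rw [e1, B t _ p ht hp hpt (Lmul _ h p b plt hb hpy hh),
              (hφ h hh).2 _ p b hy (Ne.symm hbp) plt hb hpy]
      · have ham : a.val < m := by
          have : a.val ≠ m := fun h => haM (Fin.ext h)
          omega
        rcases D g hg with h | ⟨t, h, p, ht, hp, plt, hpt, hh, rfl⟩
        · rw [A g h, A _ (Lmul x g a b ham hb hxab h), (hφ g h).2 x a b hx hab ham hb hxab]
        · have e1 : x * (t * h) = (x * t * x⁻¹) * (x * h) := by group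
          have e2 : π (x * t * x⁻¹) = swap M (swap a b p) := by
            have e0 := swap_apply_apply (swap a b) M p
            rw [swap_apply_of_ne_of_ne (Ne.symm haM) (Ne.symm hbM)] at e0
            rw [map_mul, map_mul, map_inv, hxab, hpt, e0]
          have e3 : swap a b p ≠ M := by
            intro e
            have := congrArg (swap a b) e
            rw [swap_apply_self, swap_apply_of_ne_of_ne (Ne.symm haM) (Ne.symm hbM)] at this
            exact hp this
          rw [e1, B _ _ _ (S.conj x t ht) e3 e2 (Lmul x h a b ham hb hxab hh),
            (hφ h hh).2 x a b hx hab ham hb hxab, B t h p ht hp hpt hh]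
    refine ⟨ψ, ?_, fun g hg => ⟨?_, ?_⟩⟩
    · rw [A 1 (fun i _ => by simp), φ1]
    · rcases D g hg with h | ⟨t, h, p, ht, hp, plt, hpt, hh, rfl⟩
      · rw [A g h, A _ (Lz g h), (hφ g h).1]
      · rw [← mul_assoc, H.zc, mul_assoc, B t _ p ht hp hpt (Lz h hh), B t h p ht hp hpt hh,
          (hφ h hh).1, mul_neg]
    · intro x a b hx hab ha hb hxab
      by_cases hbM : b.val < m
      · exact key g hg x a b hx hab ha hbM hxab
      · refine key g hg x b a hx (Ne.symm hab) hb ?_ (by rw [hxab, swap_comm])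
        have : a.val ≠ b.val := fun h => hab (Fin.ext h)
        omega

theorem P3.caseN (H : P3.Cov π z) (t0 : G) (a0 b0 : Fin n) (h0 : a0 ≠ b0)
    (ht0 : π t0 = swap a0 b0) (hN : ¬ ∃ u, u * t0 * u⁻¹ = z * t0) {ℓ : ℕ} (hl : Odd ℓ)
    (g u : G) (hg : sign (π g) = 1) (hu : u * g * u⁻¹ = z * g ^ ℓ) : False := by
  have hw : t0 * t0 = 1 ∨ t0 * t0 = z := H.ker _ (by rw [map_mul, ht0, swap_mul_self])
  have hwc : ∀ u, u * (t0 * t0) * u⁻¹ = t0 * t0 := by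
    intro u
    rcases hw with h | h
    · rw [h]; group
    · rw [h, ← H.zc]; group
  obtain ⟨ι, hι⟩ : ∃ ι : ℂ, (t0 * t0 = 1 ∧ ι * ι = 1) ∨ (t0 * t0 = z ∧ ι * ι = -1) := by
    rcases hw with h | h
    · exact ⟨1, Or.inl ⟨h, by simp⟩⟩
    · exact ⟨Complex.I, Or.inr ⟨h, by simp⟩⟩
  have S : P3.Sec π z (t0 * t0) ι (fun x => ∃ u, u * t0 * u⁻¹ = x) := by
    refine ⟨?_, ?_, ?_, ?_, hι⟩
    · rintro u _ ⟨v, rfl⟩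
      exact ⟨u * v, by group⟩
    · rintro _ ⟨v, rfl⟩ ⟨y, hy⟩
      refine hN ⟨v⁻¹ * y, ?_⟩
      calc v⁻¹ * y * t0 * (v⁻¹ * y)⁻¹ = v⁻¹ * (y * t0 * y⁻¹) * v := by group
        _ = (v⁻¹ * z) * v * t0 := by rw [hy]; group
        _ = z * t0 := by rw [← H.zc]; group
    · intro a b hab
      obtain ⟨c, hc⟩ := isConj_iff.1 (isConj_swap h0 hab)
      obtain ⟨v, rfl⟩ := H.surj c
      exact ⟨_, ⟨v, rfl⟩, by rw [map_mul, map_mul, map_inv, ht0, hc]⟩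
    · rintro _ ⟨v, rfl⟩
      rw [← hwc v]; group
  obtain ⟨φ, φ1, hφ⟩ := S.ind H n le_rfl
  have hz : ∀ g, φ (z * g) = - φ g := fun g =>
    (hφ g fun i hi => absurd i.2 (not_lt.2 hi)).1
  have hx : ∀ x a b g, (∃ u, u * t0 * u⁻¹ = x) → a ≠ b → π x = swap a b →
      φ (x * g) = ι * φ g := fun x a b g h1 h2 h3 =>
    (hφ g fun i hi => absurd i.2 (not_lt.2 hi)).2 x a b h1 h2 a.2 b.2 h3
  have hι4 : ι * ι * (ι * ι) = 1 := by
    rcases hι with ⟨_, h⟩ | ⟨_, h⟩ <;> rw [h] <;> norm_num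
  have φz : φ z = -1 := by have := hz 1; rwa [mul_one, φ1] at this
  have main : ∀ p : Perm (Fin n), ∀ g, π g = p → (∀ h, φ (g * h) = φ g * φ h) ∧
      (sign p = 1 → φ g * φ g = 1) ∧ (sign p = -1 → φ g * φ g = ι * ι) := by
    intro p
    induction p using Equiv.Perm.swap_induction_on with
    | one =>
      intro g hg
      refine ⟨?_, ?_, ?_⟩
      · rcases H.ker g hg with rfl | rfl
        · intro h; rw [one_mul, φ1, one_mul]
        · intro h; rw [hz, φz, neg_one_mul]
      · rcases H.ker g hg with rfl | rfl
        · intro _; rw [φ1, one_mul]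
        · intro _; rw [φz]; norm_num
      · intro h
        rw [Equiv.Perm.sign_one] at h
        exact absurd h (by decide)
    | swap_mul f a b hab ih =>
      intro g hg
      obtain ⟨x, hT, hp⟩ := S.ex a b hab
      obtain ⟨r, rfl⟩ : ∃ r, g = x * r := ⟨x⁻¹ * g, by simp⟩
      have hr : π r = f := by
        rw [map_mul, hp] at hg
        exact mul_left_cancel hg
      obtain ⟨i1, i2, i3⟩ := ih r hr
      have hs : sign (swap a b * f) = - sign f := by
        rw [map_mul, sign_swap hab, neg_one_mul]
      have e := hx x a b r hT hab hp
      refine ⟨?_, ?_, ?_⟩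
      · intro h
        rw [mul_assoc, hx x a b _ hT hab hp, i1, e, mul_assoc]
      · intro h
        have := i3 (by rw [← neg_neg (sign f), ← hs, h])
        rw [e, mul_mul_mul_comm, this, hι4]
      · intro h
        have := i2 (by rw [← neg_neg (sign f), ← hs, h, neg_neg])
        rw [e, mul_mul_mul_comm, this, mul_one]
  have hmul : ∀ g h, φ (g * h) = φ g * φ h := fun g h => (main _ g rfl).1 h
  have hpow : ∀ m : ℕ, φ (g ^ m) = φ g ^ m := by
    intro m
    induction m with
    | zero => simp [φ1]
    | succ m ih => rw [pow_succ, hmul, ih, pow_succ]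
  have hsq : φ g * φ g = 1 := (main _ g rfl).2.1 hg
  have e1 : φ u * φ u⁻¹ = 1 := by rw [← hmul, mul_inv_cancel, φ1]
  have e2 : φ g = - φ g ^ ℓ := by
    have := congrArg φ hu
    rw [hz, hpow, hmul, hmul] at this
    rw [← this]
    linear_combination (-φ g) * e1
  have e3 : φ g ^ ℓ = φ g := by
    obtain ⟨m, rfl⟩ := hl
    rw [pow_succ, pow_mul, pow_two, hsq, one_pow, one_mul]
  rw [e3] at e2
  have e4 : φ g = 0 := by linear_combination e2 / 2
  rw [e4] at hsq
  norm_num at hsq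

theorem P3.H2 (H : P3.Cov π z) {ℓ : ℕ} (hl : Odd ℓ) (g : G) (hg : ℓ.Coprime (orderOf g))
    (hs : sign (π g) = 1) :
    (∃ u, u * g * u⁻¹ = g ^ ℓ) ∨ (∃ u, u * g * u⁻¹ = z * g) := by
  obtain ⟨u, h | hu⟩ := P3.H1 H g hg
  · exact Or.inl ⟨u, h⟩
  by_cases hC : ∀ t a b, a ≠ b → π t = swap a b → ∃ u, u * t * u⁻¹ = z * t
  · by_cases h2 : 2 ∣ orderOf (π g)
    · exact Or.inr (P3.caseC H hC g hs h2)
    · exfalso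
      have hm : Odd (orderOf (π g)) := by
        rw [← Nat.not_even_iff_odd, even_iff_two_dvd]; exact h2
      have h3 : g ^ orderOf (π g) = 1 ∨ g ^ orderOf (π g) = z :=
        H.ker _ (by rw [map_pow, pow_orderOf_eq_one])
      have h4 := congrArg (· ^ orderOf (π g)) hu
      have hzo : ∀ m : ℕ, Odd m → z ^ m = z := by
        rintro _ ⟨m, rfl⟩
        rw [pow_succ, pow_mul, pow_two, H.zz, one_pow, one_mul]
      have hcz : Commute z (g ^ ℓ) := H.zc _
      simp only [conj_pow, hcz.mul_pow, hzo _ hm] at h4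
      rw [← pow_mul, mul_comm ℓ, pow_mul] at h4
      rcases h3 with h3 | h3 <;> rw [h3] at h4
      · simp at h4
        exact H.z1 h4.symm
      · rw [hzo _ hl, H.zz, ← H.zc] at h4
        simp at h4
        exact H.z1 h4
  · exfalso
    push Not at hC
    obtain ⟨t, a, b, hab, ht, hN⟩ := hC
    exact P3.caseN H t a b hab ht (fun ⟨v, hv⟩ => hN v hv) hl g u hs hu
end P3b

/-- Let `G` be a double cover of the symmetric group `S_n`: a finite group with a
central subgroup `Z` of order `2` such that `G/Z ≅ S_n`.  Every block `b` of `kG`,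
with `k` an algebraic closure of `𝔽_ℓ`, has Morita Frobenius number `1`: the block
algebra `kG·b` is Morita equivalent, as a `k`-algebra, to its first Frobenius twist;
i.e. there is a `k`-linear equivalence between the module categories of `kG·b` and of
its first Frobenius twist. -/
theorem double_cover_symmetricGroup_block_morita_frobenius_number_one
    (ℓ : ℕ) [Fact ℓ.Prime] (k : Type) [Field k] [IsAlgClosed k] [CharP k ℓ]
    [Algebra (ZMod ℓ) k] [IsAlgClosure (ZMod ℓ) k]
    (n : ℕ) (G : Type) [Group G] [Fintype G]
    (Z : Subgroup G) [Z.Normal] (hZc : Z ≤ Subgroup.center G) (hZ2 : Nat.card Z = 2)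
    (cover : G ⧸ Z ≃* Equiv.Perm (Fin n))
    (b : MonoidAlgebra k G) (hb : IsBlock b) [Fact (IsCentralIdem b)] :
    ∃ E : ModuleCat.{0} (Corner b) ≌ ModuleCat.{0} (FrobTwist ℓ (Corner b)),
      ∃ hadd : E.functor.Additive,
        @Functor.Linear k _ _ _ _ _ _ _ _ _ E.functor := by

  obtain ⟨z, hzZ, hz1, hzall⟩ : ∃ z ∈ Z, z ≠ 1 ∧ ∀ x ∈ Z, x = 1 ∨ x = z := by
    obtain ⟨x, y, hxy, hall⟩ := Nat.card_eq_two_iff.1 hZ2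
    have hx : ∀ c : Z, c = x ∨ c = y := fun c => by
      have : c ∈ ({x, y} : Set Z) := by rw [hall]; trivial
      simpa using this
    rcases hx 1 with h | h
    · refine ⟨y, y.2, fun e => hxy ?_, fun c hc => ?_⟩
      · rw [← h]; exact (Subtype.ext e).symm
      · rcases hx ⟨c, hc⟩ with h1 | h1
        · left; rw [← h] at h1; exact congrArg Subtype.val h1
        · right; exact congrArg Subtype.val h1
    · refine ⟨x, x.2, fun e => hxy ?_, fun c hc => ?_⟩
      · rw [← h]; exact Subtype.ext e
      · rcases hx ⟨c, hc⟩ with h1 | h1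
        · right; exact congrArg Subtype.val h1
        · left; rw [← h] at h1; exact congrArg Subtype.val h1
  have H : P3.Cov (cover.toMonoidHom.comp (QuotientGroup.mk' Z)) z := by
    refine ⟨?_, ?_, ?_, ?_, hz1, ?_⟩
    · exact cover.surjective.comp (QuotientGroup.mk'_surjective Z)
    · intro g hg
      refine hzall g ((QuotientGroup.eq_one_iff g).1 ?_)
      exact cover.injective (hg.trans (map_one cover).symm)
    · have : (QuotientGroup.mk' Z) z = 1 := (QuotientGroup.eq_one_iff z).2 hzZ
      rw [MonoidHom.comp_apply, this, map_one]
    · rcases hzall (z * z) (Z.mul_mem hzZ hzZ) with h | h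
      · exact h
      · exact absurd (by simpa using h) hz1
    · intro g
      exact ((Subgroup.mem_center_iff.1 (hZc hzZ)) g).symm
  have hp : ℓ.Prime := Fact.out
  obtain ⟨s, hs, hsb⟩ := P2.main (ℓ := ℓ) z H.zc H.zz
    (Equiv.Perm.sign.comp (cover.toMonoidHom.comp (QuotientGroup.mk' Z)))
    (fun g hg => P3.H1 H g hg)
    (fun h2 g hg hsg => P3.H2 H (hp.odd_of_ne_two h2) g hg hsg) b hb
  exact P1.main b s hs hsb
end

section
/- Let ℓ be a prime, k an algebraic closure of the field with ℓ elements, n a natural number, and G a finite group possessing a central subgroup Z of order 2 such that G/Z is isomorphic to the alternating group A_n (i.e. G is a double cover of A_n). Then every block b of kG satisfies mf(kGb) = 1; that is, kGb is Morita equivalent (as a k-algebra) to its first Frobenius twist. -/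
open CategoryTheory

section Morita
variable {ℓ : ℕ} [Fact ℓ.Prime] {k : Type} [Field k] [IsAlgClosed k] [CharP k ℓ]

theorem morita_of_semilinear {R : Type} [Ring R] [Algebra k R] (b : R)
    [hbF : Fact (IsCentralIdem b)] (ψ : R ≃+* R) (hψ : ∀ (c : k) (x : R), ψ (c • x) = c ^ ℓ • ψ x)
    (hb : ψ b = b) :
    ∃ E : ModuleCat.{0} (Corner b) ≌ ModuleCat.{0} (FrobTwist ℓ (Corner b)),
      ∃ hadd : E.functor.Additive,
        @Functor.Linear k _ _ _ _ _ _ _ _ _ E.functor := by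
  have hb' : ψ.symm b = b := by rw [RingEquiv.symm_apply_eq, hb]
  let e1 : FrobTwist ℓ (Corner b) ≃+* Corner b :=
    { toFun := fun (x : Corner b) => (⟨ψ x.1, by
          constructor
          · have := congrArg ψ x.2.1; rwa [map_mul, hb] at this
          · have := congrArg ψ x.2.2; rwa [map_mul, hb] at this⟩ : Corner b)
      invFun := fun (x : Corner b) => (⟨ψ.symm x.1, by
          constructor
          · have := congrArg ψ.symm x.2.1; rwa [map_mul, hb'] at this
          · have := congrArg ψ.symm x.2.2; rwa [map_mul, hb'] at this⟩ : Corner b)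
      left_inv := fun x => Subtype.ext (ψ.symm_apply_apply _)
      right_inv := fun x => Subtype.ext (ψ.apply_symm_apply _)
      map_mul' := fun x y => Subtype.ext (map_mul ψ _ _)
      map_add' := fun x y => Subtype.ext (map_add ψ _ _) }
  let e : FrobTwist ℓ (Corner b) ≃ₐ[k] Corner b :=
    AlgEquiv.ofRingEquiv (f := e1) (by
      intro c
      refine Subtype.ext ?_
      change ψ ((frobeniusEquiv k ℓ).symm c • b) = c • b
      rw [hψ, hb]
      congr 1
      exact (frobeniusEquiv k ℓ).apply_symm_apply c)
  let M := MoritaEquivalence.ofAlgEquiv e.symm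
  exact ⟨M.eqv, inferInstance, M.linear⟩
end Morita

section PartA

theorem sum_eq_sum_fixed {ℓ : ℕ} [Fact ℓ.Prime] {k : Type*} [Field k] [CharP k ℓ]
    {X : Type*} [Fintype X] [DecidableEq X] (ρ : Equiv.Perm X) (N : ℕ) (hρ : ρ ^ ℓ ^ N = 1)
    (f : X → k) (hf : ∀ x, f (ρ x) = f x) :
    ∑ x, f x = ∑ x, if ρ x = x then f x else 0 := by
  classical
  have key : ∀ v : k, ((Finset.univ.filter (fun x => f x = v)).card : k)
      = ((Finset.univ.filter (fun x => f x = v ∧ ρ x = x)).card : k) := by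
    intro v
    let ρ' : Equiv.Perm {x // f x = v} := ρ.subtypePerm (fun x => by simp [hf])
    have h1 : ρ' ^ ℓ ^ N = 1 := by
      ext x
      rw [Equiv.Perm.subtypePerm_pow]
      simp [hρ]
    let F : Function.End {x // f x = v} := fun x => ρ' x
    have h1' : F ^ ℓ ^ N = 1 := by
      have hh : ∀ n : ℕ, F ^ n = fun x => (ρ' ^ n) x := by
        intro n
        induction n with
        | zero => rfl
        | succ n ih => rw [pow_succ, ih]; rfl
      rw [hh, h1]; rfl
    have := Equiv.Perm.card_fixedPoints_modEq h1'
    replace this := (CharP.natCast_eq_natCast k ℓ).2 this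
    have h2 : Fintype.card {x // f x = v} = (Finset.univ.filter (fun x => f x = v)).card :=
      Fintype.card_subtype _
    have h3 : Fintype.card (Function.fixedPoints F)
        = (Finset.univ.filter (fun x => f x = v ∧ ρ x = x)).card := by
      rw [← Fintype.card_subtype]
      refine Fintype.card_congr
        { toFun := fun x => ⟨x.1.1, x.1.2, congrArg Subtype.val x.2⟩
          invFun := fun x => ⟨⟨x.1, x.2.1⟩, Subtype.ext x.2.2⟩
          left_inv := fun x => rfl
          right_inv := fun x => rfl }
    rw [← h2, ← h3]
    exact this
  have e1 : ∑ x, f x = ∑ v ∈ Finset.univ.image f, ((Finset.univ.filter (fun x => f x = v)).card : k) * v := by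
    rw [← Finset.sum_fiberwise_of_maps_to (t := Finset.univ.image f) (g := f) (by simp)]
    refine Finset.sum_congr rfl fun v _ => ?_
    rw [Finset.sum_congr rfl (g := fun _ => v) (by simp)]
    simp
  rw [e1, ← Finset.sum_fiberwise_of_maps_to (t := Finset.univ.image f) (g := f) (by simp)]
  refine Finset.sum_congr rfl fun v _ => ?_
  rw [key v, Finset.sum_ite, Finset.sum_const_zero, add_zero, Finset.filter_filter,
    Finset.sum_congr rfl (g := fun _ => v) (by simp +contextual)]
  simp

theorem sum_pow_eq {R ι : Type*} [Semiring R] [Fintype ι] (f : ι → R) (n : ℕ) :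
    (∑ i, f i) ^ n = ∑ w : Fin n → ι, (List.ofFn (fun j => f (w j))).prod := by
  induction n with
  | zero => simp
  | succ n ih =>
    rw [pow_succ', ih, Finset.sum_mul_sum, ← (Fin.consEquiv (fun _ => ι)).sum_comp,
      Fintype.sum_prod_type]
    simp [List.ofFn_succ]

theorem trace_rotate {R T : Type*} [Semiring R] (τ : R → T) (hτ : ∀ x y, τ (x * y) = τ (y * x))
    {m : ℕ} (w : Fin (m + 1) → R) :
    τ (List.ofFn (fun j => w (finRotate (m + 1) j))).prod = τ (List.ofFn w).prod := by
  rw [List.ofFn_succ', List.ofFn_succ (f := w), List.prod_concat, List.prod_cons, hτ]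
  congr 3
  · simp
  · simp

theorem finRotate_pow_apply (m j : ℕ) (i : Fin (m + 1)) :
    (((finRotate (m + 1)) ^ j) i : ℕ) = (i + j) % (m + 1) := by
  induction j with
  | zero => simp [Nat.mod_eq_of_lt i.2]
  | succ j ih =>
    rw [pow_succ', Equiv.Perm.mul_apply, finRotate_apply, Fin.val_add, ih]
    simp [add_assoc]

theorem trace_pow {ℓ : ℕ} [Fact ℓ.Prime] {k : Type*} [Field k] [CharP k ℓ]
    {R ι : Type*} [Semiring R] [Fintype ι] (f : ι → R) (τ : R →+ k)
    (hτ : ∀ x y, τ (x * y) = τ (y * x)) (N : ℕ) :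
    τ ((∑ i, f i) ^ ℓ ^ N) = ∑ i, τ (f i ^ ℓ ^ N) := by
  classical
  obtain ⟨m, hm⟩ : ∃ m, ℓ ^ N = m + 1 :=
    Nat.exists_eq_succ_of_ne_zero (pow_ne_zero _ (Fact.out : ℓ.Prime).ne_zero)
  rw [hm, sum_pow_eq, map_sum]
  let ρ : Equiv.Perm (Fin (m + 1) → ι) := (finRotate (m + 1)).symm.arrowCongr (Equiv.refl ι)
  have hρa : ∀ w j, ρ w j = w (finRotate (m + 1) j) := fun w j => rfl
  have hρp : ∀ n w j, (ρ ^ n) w j = w (((finRotate (m + 1)) ^ n) j) := by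
    intro n
    induction n with
    | zero => simp
    | succ n ih => intro w j; rw [pow_succ, Equiv.Perm.mul_apply, ih, hρa, pow_succ',
        Equiv.Perm.mul_apply]
  have hρ1 : ρ ^ ℓ ^ N = 1 := by
    ext w j
    rw [hρp]
    refine congrArg w (Fin.ext ?_)
    rw [hm, finRotate_pow_apply]
    simp [Nat.mod_eq_of_lt j.2]
  rw [sum_eq_sum_fixed (ℓ := ℓ) ρ N hρ1 _ (fun w => trace_rotate τ hτ (fun j => f (w j)))]
  rw [← Finset.sum_filter]
  symm
  refine Finset.sum_bij (fun i _ => fun _ => i) ?_ ?_ ?_ ?_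
  · intro i _
    simp only [Finset.mem_filter, Finset.mem_univ, true_and]
    ext j; rfl
  · intro i _ j _ h
    exact congrFun h 0
  · intro w hw
    simp only [Finset.mem_filter, Finset.mem_univ, true_and] at hw
    refine ⟨w 0, Finset.mem_univ _, ?_⟩
    ext j
    have h1 : ∀ n, w (((finRotate (m + 1)) ^ n) 0) = w 0 := by
      intro n
      induction n with
      | zero => simp
      | succ n ih => rw [pow_succ', Equiv.Perm.mul_apply, ← hρa w, hw, ih]
    have := h1 j
    rw [show ((finRotate (m + 1)) ^ (j : ℕ)) 0 = j from Fin.ext (by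
      rw [finRotate_pow_apply]; simp [Nat.mod_eq_of_lt j.2])] at this
    exact this.symm
  · intro i _
    simp [pow_succ']

open MonoidAlgebra in
theorem coeff_pow_trace {ℓ : ℕ} [Fact ℓ.Prime] {k : Type*} [Field k] [CharP k ℓ]
    {H : Type*} [Group H] [Fintype H] [DecidableEq H] (u : H) (hu : ∀ h, h * u = u * h)
    (y : MonoidAlgebra k H) (N : ℕ) :
    (y ^ ℓ ^ N).coeff u = ∑ h, if h ^ ℓ ^ N = u then (y.coeff h) ^ ℓ ^ N else 0 := by
  let τ : MonoidAlgebra k H →+ k :=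
    { toFun := fun y => y.coeff u, map_zero' := by simp, map_add' := by simp }
  have hτ : ∀ x y, τ (x * y) = τ (y * x) := by
    intro x y
    induction x using MonoidAlgebra.induction_linear with
    | zero => simp
    | add a b ha hb => simp only [add_mul, mul_add, map_add, ha, hb]
    | single g r =>
      change (single g r * y).coeff u = (y * single g r).coeff u
      rw [coeff_single_mul_apply, coeff_mul_single_apply, mul_comm, hu]
  have hy : y = ∑ h, single h (y.coeff h) := by
    ext g
    simp [MonoidAlgebra.coeff_sum]
  have := trace_pow (ℓ := ℓ) (fun h => single h (y.coeff h)) τ hτ N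
  rw [← hy] at this
  change τ (y ^ ℓ ^ N) = _
  rw [this]
  refine Finset.sum_congr rfl fun h _ => ?_
  rw [single_pow]
  change (single _ _).coeff u = _
  simp [Finsupp.single_apply]

end PartA

section PartA2

open MonoidAlgebra

theorem exists_good_pow (ℓ : ℕ) [Fact ℓ.Prime] (G : Type*) [Group G] [Fintype G] :
    ∃ N r : ℕ, ℓ.Coprime r ∧ (∀ x : G, (x ^ ℓ ^ N) ^ r = 1) ∧
      (∀ x : G, x ^ r = 1 → x ^ ℓ ^ N = x) := by
  have hp : ℓ.Prime := Fact.out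
  obtain ⟨a, r, hr, hc⟩ := Nat.exists_eq_pow_mul_and_not_dvd (Fintype.card_ne_zero (α := G)) ℓ hp.ne_one
  have hcop : ℓ.Coprime r := (Nat.Prime.coprime_iff_not_dvd hp).2 hr
  have hr0 : 0 < r := Nat.pos_of_ne_zero (by rintro rfl; simp at hr)
  have hφ : 0 < r.totient := Nat.totient_pos.2 hr0
  refine ⟨a * r.totient, r, hcop, ?_, ?_⟩
  · intro x
    rw [← pow_mul]
    apply orderOf_dvd_iff_pow_eq_one.1
    refine (orderOf_dvd_card).trans ?_
    rw [hc]
    exact mul_dvd_mul_right (pow_dvd_pow _ (Nat.le_mul_of_pos_right a hφ)) r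
  · intro x hx
    have h1 : ℓ ^ (a * r.totient) ≡ 1 [MOD r] := by
      rw [mul_comm, pow_mul]
      simpa using (Nat.ModEq.pow_totient hcop).pow a
    have h2 : ℓ ^ (a * r.totient) ≡ 1 [MOD orderOf x] :=
      h1.of_dvd (orderOf_dvd_of_pow_eq_one hx)
    have := pow_eq_pow_iff_modEq.2 h2
    simpa using this

variable {ℓ : ℕ} [Fact ℓ.Prime] {k : Type*} [Field k] [CharP k ℓ]

theorem central_coeff {H : Type*} [Group H] {e : MonoidAlgebra k H} (he : ∀ x, e * x = x * e)
    (x y : H) : e.coeff (x * y) = e.coeff (y * x) := by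
  have := congrArg (fun z => z.coeff (x * y * x)) (he (single x 1))
  simp only [coeff_mul_single_apply, coeff_single_mul_apply] at this
  simpa [mul_assoc] using this

theorem central_of_coeff {H : Type*} [Group H] {e : MonoidAlgebra k H}
    (he : ∀ x y : H, e.coeff (x * y) = e.coeff (y * x)) (x) : e * x = x * e := by
  induction x using MonoidAlgebra.induction_linear with
  | zero => simp
  | add a b ha hb => simp only [add_mul, mul_add, ha, hb]
  | single g r =>
    ext u
    rw [coeff_single_mul_apply, coeff_mul_single_apply, mul_comm, he]

theorem brauer_idem {G : Type*} [Group G] [Fintype G] {e : MonoidAlgebra k G}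
    (he : IsCentralIdem e) (u : G) (N : ℕ) (hu : u ^ ℓ ^ N = 1) :
    ∃ f : MonoidAlgebra k (Subgroup.centralizer ({u} : Set G)), IsCentralIdem f ∧
      ∀ c, f.coeff c = e.coeff (c : G) := by
  classical
  refine ⟨ofCoeff (Finsupp.equivFunOnFinite.symm (fun c => e.coeff (c : G))), ⟨?_, ?_⟩, ?_⟩
  · apply central_of_coeff
    intro x y
    exact central_coeff he.1 (x : G) (y : G)
  · ext c
    have h2 := congrArg (fun z => z.coeff (c : G)) he.2
    simp only [coeff_mul_apply_left] at h2 ⊢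
    rw [Finsupp.sum_fintype _ _ (by simp)] at h2 ⊢
    change _ = e.coeff (c : G)
    rw [← h2]
    let ρ : Equiv.Perm G := (MulAut.conj u).toEquiv
    have hρ : ρ ^ ℓ ^ N = 1 := by
      have : ∀ n : ℕ, ∀ x, (ρ ^ n) x = MulAut.conj (u ^ n) x := by
        intro n
        induction n with
        | zero => simp
        | succ n ih => intro x; rw [pow_succ, Equiv.Perm.mul_apply, ih, pow_succ, map_mul]; rfl
      ext x
      rw [this, hu]
      simp
    have hc : u * (c : G) = c * u := Subgroup.mem_centralizer_singleton_iff.1 c.2 |>.symm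
    rw [sum_eq_sum_fixed (ℓ := ℓ) ρ N hρ]
    · rw [← Finset.sum_filter]
      symm
      rw [← Finset.sum_subtype_of_mem (p := fun x => x ∈ Subgroup.centralizer ({u} : Set G))
        (fun x => e.coeff x * e.coeff (x⁻¹ * (c : G)))]
      · refine Finset.sum_congr ?_ ?_
        · ext x
          simp only [Finset.mem_subtype, Finset.mem_filter, Finset.mem_univ, true_and, iff_true]
          have := Subgroup.mem_centralizer_singleton_iff.1 x.2
          change u * (x : G) * u⁻¹ = x
          rw [← this]; simp
        · intro x _
          rfl
      · intro x hx
        simp only [Finset.mem_filter, Finset.mem_univ, true_and] at hx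
        rw [Subgroup.mem_centralizer_singleton_iff]
        change u * x * u⁻¹ = x at hx
        rw [mul_inv_eq_iff_eq_mul] at hx
        exact hx.symm
    · intro x
      change e.coeff (u * x * u⁻¹) * e.coeff ((u * x * u⁻¹)⁻¹ * c) = _
      congr 1
      · rw [central_coeff he.1]; simp
      · rw [show (u * x * u⁻¹)⁻¹ * (c : G) = u * (x⁻¹ * c * u⁻¹) by
          simp only [mul_inv_rev, inv_inv, mul_assoc]
          congr 2
          rw [eq_mul_inv_iff_mul_eq, mul_assoc, ← hc]; simp, central_coeff he.1]
        simp
  · intro c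
    rfl

theorem idem_pow_mul {H : Type*} [Group H] {e : MonoidAlgebra k H} (he : IsCentralIdem e) (g : H)
    (q : ℕ) (hq : q ≠ 0) : (e * single g 1) ^ q = e * single (g ^ q) 1 := by
  have hc : Commute e (single g 1) := he.1 _
  rw [hc.mul_pow, single_pow, one_pow]
  congr 1
  exact IsIdempotentElem.pow_eq he.2 hq

theorem coeff_nonregular {G : Type*} [Group G] [Fintype G] {e : MonoidAlgebra k G}
    (he : IsCentralIdem e) (N r : ℕ) (h1 : ∀ x : G, (x ^ ℓ ^ N) ^ r = 1)
    (h2 : ∀ x : G, x ^ r = 1 → x ^ ℓ ^ N = x) (g : G) (hg : g ^ ℓ ^ N ≠ g) : e.coeff g = 0 := by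
  classical
  set q := ℓ ^ N with hq
  have hq0 : q ≠ 0 := pow_ne_zero _ (Fact.out : ℓ.Prime).ne_zero
  have hqq : ∀ x : G, (x ^ q) ^ q = x ^ q := fun x => h2 _ (h1 x)
  have hcomm : Commute g (g ^ q) := Commute.self_pow g q
  let u := g * (g ^ q)⁻¹
  have hu : u ^ q = 1 := by
    change (g * (g ^ q)⁻¹) ^ q = 1
    rw [hcomm.inv_right.mul_pow, inv_pow, hqq]; simp
  have hus : u * g ^ q = g := by simp [u]
  obtain ⟨f, hf, hfe⟩ := brauer_idem he u N hu
  let C := Subgroup.centralizer ({u} : Set G)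
  have hgu : Commute g u := (Commute.refl g).mul_right hcomm.inv_right
  let s : C := ⟨g ^ q, Subgroup.mem_centralizer_singleton_iff.2 (hgu.pow_left q)⟩
  let v : C := ⟨u, Subgroup.mem_centralizer_singleton_iff.2 rfl⟩
  have hs : s ^ q = s := Subtype.ext (hqq g)
  have hv : ∀ h : C, h * v = v * h := fun h =>
    Subtype.ext (Subgroup.mem_centralizer_singleton_iff.1 h.2)
  have key := coeff_pow_trace (ℓ := ℓ) v hv (f * single s⁻¹ 1) N
  rw [idem_pow_mul hf _ _ hq0, ← hq, inv_pow, hs, coeff_mul_single_apply, hfe] at key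
  simp only [inv_inv, mul_one] at key
  rw [show ((v * s : C) : G) = g from hus] at key
  rw [key]
  refine Finset.sum_eq_zero fun h _ => ?_
  rw [if_neg]
  intro hh
  have h3 : (h : G) ^ q = u := congrArg Subtype.val hh
  have h4 : u = 1 := by rw [← hu, ← h3, hqq]
  apply hg
  rw [h4, one_mul] at hus
  exact hus

theorem coeff_regular {G : Type*} [Group G] [Fintype G] {e : MonoidAlgebra k G}
    (he : IsCentralIdem e) (N r : ℕ) (hr : ℓ.Coprime r) (h1 : ∀ x : G, (x ^ ℓ ^ N) ^ r = 1)
    (g : G) (hg : g ^ ℓ ^ N = g) : e.coeff (g ^ ℓ) = e.coeff g ^ ℓ := by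
  classical
  have hp0 : ℓ ≠ 0 := (Fact.out : ℓ.Prime).ne_zero
  have k1 := coeff_pow_trace (ℓ := ℓ) (1 : G) (by simp) (e * single g⁻¹ 1) N
  have k2 := coeff_pow_trace (ℓ := ℓ) (1 : G) (by simp) (e * single g⁻¹ 1) (N + 1)
  rw [idem_pow_mul he _ _ (pow_ne_zero _ hp0), coeff_mul_single_apply, inv_pow, hg] at k1
  rw [idem_pow_mul he _ _ (pow_ne_zero _ hp0), coeff_mul_single_apply, inv_pow, pow_succ,
    pow_mul, hg] at k2
  simp only [inv_inv, mul_one, one_mul] at k1 k2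
  rw [k1, k2, sum_pow_char]
  refine Finset.sum_congr rfl fun h _ => ?_
  by_cases hh : h ^ ℓ ^ N = 1
  · rw [if_pos hh, if_pos (by rw [pow_mul, hh, one_pow]), pow_mul]
  · rw [if_neg hh, if_neg, zero_pow hp0]
    intro h3
    apply hh
    rw [pow_mul] at h3
    have := pow_gcd_eq_one.2 ⟨h3, h1 h⟩
    rwa [hr.gcd_eq_one, pow_one] at this

theorem frob_fixed {G : Type*} [Group G] [Fintype G] {e : MonoidAlgebra k G}
    (he : IsCentralIdem e) (hinv : ∀ (φ : G ≃* G) g, e.coeff (φ g) = e.coeff g)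
    (hG : ∀ g : G, ¬ ℓ ∣ orderOf g → ∃ φ : G ≃* G, φ g = g ^ ℓ) (g : G) :
    e.coeff g ^ ℓ = e.coeff g := by
  obtain ⟨N, r, hr, h1, h2⟩ := exists_good_pow ℓ G
  by_cases hg : g ^ ℓ ^ N = g
  · rw [← coeff_regular he N r hr h1 g hg]
    obtain ⟨φ, hφ⟩ := hG g (by
      intro hd
      have : g ^ r = 1 := by rw [← hg, h1]
      have h3 := hd.trans (orderOf_dvd_of_pow_eq_one this)
      exact (Nat.Prime.coprime_iff_not_dvd Fact.out).1 hr h3)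
    rw [← hφ, hinv]
  · rw [coeff_nonregular he N r h1 h2 g hg, zero_pow (Fact.out : ℓ.Prime).ne_zero]

theorem block_eq_of_mul_ne {R : Type*} [Ring R] {b c : R} (hb : IsBlock b) (hc : IsBlock c)
    (h : b * c ≠ 0) : b = c := by
  obtain ⟨⟨cb, ib⟩, _, pb⟩ := hb
  obtain ⟨⟨cc, ic⟩, _, pc⟩ := hc
  have hci : IsCentralIdem (b * c) := by
    refine ⟨fun x => ?_, ?_⟩
    · rw [mul_assoc, cc, ← mul_assoc, cb, mul_assoc]
    · rw [mul_assoc, ← mul_assoc c, ← cb c, mul_assoc b c, ic, ← mul_assoc, ib]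
  have aux : ∀ d : R, IsCentralIdem d → d * (b * c) = b * c → IsCentralIdem (d - b * c) := by
    rintro d ⟨cd, id⟩ hd
    refine ⟨fun x => by rw [sub_mul, mul_sub, cd, hci.1], ?_⟩
    rw [sub_mul, mul_sub, mul_sub, id, hd, ← cd, hd, hci.2]; simp
  have hb1 : b * (b * c) = b * c := by rw [← mul_assoc, ib]
  have hc1 : c * (b * c) = b * c := by rw [cb, ← mul_assoc, ic, ← cb]
  have e1 := pb (b * c) (b - b * c) hci (aux b ⟨cb, ib⟩ hb1)
    (by rw [mul_sub, hci.2, ← cb, hb1, sub_self]) (by abel)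
  have e2 := pc (b * c) (c - b * c) hci (aux c ⟨cc, ic⟩ hc1)
    (by rw [mul_sub, hci.2, ← cc, hc1, sub_self]) (by abel)
  have e1' := sub_eq_zero.1 (e1.resolve_left h)
  have e2' := sub_eq_zero.1 (e2.resolve_left h)
  rw [e1', ← e2']

theorem IsCentralIdem.map {R S : Type*} [Ring R] [Ring S] (f : R ≃+* S) {b : R}
    (hb : IsCentralIdem b) : IsCentralIdem (f b) := by
  refine ⟨fun x => ?_, by rw [← map_mul, hb.2]⟩
  obtain ⟨y, rfl⟩ := f.surjective x
  rw [← map_mul, hb.1, map_mul]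

theorem IsBlock.map {R S : Type*} [Ring R] [Ring S] (f : R ≃+* S) {b : R}
    (hb : IsBlock b) : IsBlock (f b) := by
  refine ⟨hb.1.map f, by simpa using hb.2.1, fun c d hc hd hcd h => ?_⟩
  have := hb.2.2 (f.symm c) (f.symm d) (hc.map f.symm) (hd.map f.symm)
    (by rw [← map_mul, hcd, map_zero]) (by rw [← map_add, ← h, f.symm_apply_apply])
  simpa using this

theorem block_frob {G : Type*} [Group G] [Fintype G] [PerfectRing k ℓ] {b : MonoidAlgebra k G}
    (hb : IsBlock b)
    (hG : ∀ g : G, ¬ ℓ ∣ orderOf g → ∃ φ : G ≃* G, φ g = g ^ ℓ) :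
    ∃ ψ : MonoidAlgebra k G ≃+* MonoidAlgebra k G,
      (∀ (c : k) x, ψ (c • x) = c ^ ℓ • ψ x) ∧ ψ b = b := by
  classical
  let σ : MonoidAlgebra k G ≃+* MonoidAlgebra k G := mapRingEquiv G (frobeniusEquiv k ℓ)
  have hσc : ∀ x g, (σ x).coeff g = x.coeff g ^ ℓ := by
    intro x g
    simp [σ, frobenius_def]
  let act : (G ≃* G) → MonoidAlgebra k G ≃+* MonoidAlgebra k G :=
    fun φ => (domCongr k k φ).toRingEquiv
  have hactc : ∀ φ x g, (act φ x).coeff g = x.coeff (φ.symm g) := by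
    intro φ x g
    exact coeff_domCongr (R := k) φ x g
  have : Finite (G ≃* G) := Finite.of_injective (fun φ : G ≃* G => (φ : G → G)) DFunLike.coe_injective
  have : Fintype (G ≃* G) := Fintype.ofFinite _
  let O : Finset (MonoidAlgebra k G) := Finset.univ.image (fun φ : G ≃* G => act φ b)
  have hO : ∀ c ∈ O, IsBlock c := by
    intro c hc
    obtain ⟨φ, _, rfl⟩ := Finset.mem_image.1 hc
    exact hb.map _
  have hbO : b ∈ O := by
    refine Finset.mem_image.2 ⟨MulEquiv.refl G, Finset.mem_univ _, ?_⟩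
    ext g; rw [hactc]; rfl
  let e := ∑ c ∈ O, c
  have hmul : ∀ c ∈ O, c * e = c := by
    intro c hc
    simp only [e]
    rw [Finset.mul_sum, Finset.sum_eq_single c]
    · exact (hO c hc).1.2
    · intro d hd hdc
      by_contra h
      exact hdc (block_eq_of_mul_ne (hO c hc) (hO d hd) h).symm
    · exact fun h => absurd hc h
  have he : IsCentralIdem e := by
    refine ⟨fun x => ?_, ?_⟩
    · simp only [e]
      rw [Finset.sum_mul, Finset.mul_sum]
      exact Finset.sum_congr rfl fun c hc => (hO c hc).1.1 x
    · conv_lhs => enter [1]; simp only [e]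
      rw [Finset.sum_mul]
      exact Finset.sum_congr rfl hmul
  have hinv' : ∀ φ : G ≃* G, act φ e = e := by
    intro φ
    simp only [e]
    rw [map_sum]
    refine Finset.sum_bij (fun c _ => act φ c) ?_ ?_ ?_ ?_
    · intro c hc
      obtain ⟨χ, _, rfl⟩ := Finset.mem_image.1 hc
      refine Finset.mem_image.2 ⟨χ.trans φ, Finset.mem_univ _, ?_⟩
      ext g; rw [hactc, hactc, hactc]; rfl
    · intro c _ d _ h
      exact (act φ).injective h
    · intro c hc
      obtain ⟨χ, _, rfl⟩ := Finset.mem_image.1 hc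
      refine ⟨act (χ.trans φ.symm) b, Finset.mem_image.2 ⟨χ.trans φ.symm, Finset.mem_univ _, rfl⟩, ?_⟩
      ext g; rw [hactc, hactc, hactc]; simp
    · intro c _; rfl
  have hinv : ∀ (φ : G ≃* G) g, e.coeff (φ g) = e.coeff g := by
    intro φ g
    conv_lhs => rw [← hinv' φ, hactc]
    simp
  have hσe : σ e = e := by
    ext g
    rw [hσc, frob_fixed (ℓ := ℓ) he hinv hG]
  have h1 : σ b * e = σ b := by
    conv_lhs => rw [← hσe]
    rw [← map_mul, hmul b hbO]
  have hσb : IsBlock (σ b) := hb.map σ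
  obtain ⟨c, hc, hne⟩ : ∃ c ∈ O, σ b * c ≠ 0 := by
    by_contra hcon
    push Not at hcon
    apply hσb.2.1
    rw [← h1]
    simp only [e]
    rw [Finset.mul_sum]
    exact Finset.sum_eq_zero hcon
  have h2 := block_eq_of_mul_ne hσb (hO c hc) hne
  obtain ⟨φ, _, rfl⟩ := Finset.mem_image.1 hc
  refine ⟨σ.trans (act φ).symm, ?_, ?_⟩
  · intro c x
    simp only [RingEquiv.trans_apply]
    have h3 : σ (c • x) = c ^ ℓ • σ x := by
      ext g
      rw [hσc]
      simp only [coeff_smul_apply, smul_eq_mul, mul_pow, hσc]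
    rw [h3]
    exact map_smul (domCongr k k φ).symm _ _
  · rw [RingEquiv.trans_apply, h2, RingEquiv.symm_apply_apply]

end PartA2

section PartB

theorem cox_u_comm {Q : Type*} [Group Q] (T : ℕ → Q) (N : ℕ)
    (hcom : ∀ i j, i + 2 ≤ j → j < N → T i * T j = T j * T i)
    (j : ℕ) (hj : j < N) (u : ℕ → Q) (hu0 : u 0 = 1) (hu : ∀ r, u (r + 1) = u r * T (j - r))
    (r i : ℕ) (h : i + r < j) : u r * T i = T i * u r := by
  induction r with
  | zero => simp [hu0]
  | succ r ih =>
    rw [hu, mul_assoc, ← hcom i (j - r) (by omega) (by omega), ← mul_assoc, ih (by omega), mul_assoc]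

theorem cox_u_shift {Q : Type*} [Group Q] (T : ℕ → Q) (N : ℕ)
    (hbr : ∀ i, i + 1 < N → T i * T (i + 1) * T i = T (i + 1) * T i * T (i + 1))
    (hcom : ∀ i j, i + 2 ≤ j → j < N → T i * T j = T j * T i)
    (j : ℕ) (hj : j < N) (u : ℕ → Q) (hu0 : u 0 = 1) (hu : ∀ r, u (r + 1) = u r * T (j - r))
    (r : ℕ) (i : ℕ) (hr : r ≤ j + 1) (hij : i + 1 ≤ j) (h : j < i + r) :
    u r * T (i + 1) = T i * u r := by
  induction r with
  | zero => omega
  | succ r ih =>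
    by_cases hc : j < i + r
    · rw [hu, mul_assoc, hcom (j - r) (i + 1) (by omega) (by omega), ← mul_assoc,
        ih (by omega) hc, mul_assoc]
    · obtain ⟨s, rfl⟩ : ∃ s, r = s + 1 := ⟨r - 1, by omega⟩
      have e1 : j - (s + 1) = i := by omega
      have e2 : j - s = i + 1 := by omega
      rw [hu, hu, e1, e2, mul_assoc (u s), mul_assoc (u s), ← hbr i (by omega), ← mul_assoc (u s),
        ← mul_assoc (u s), cox_u_comm T N hcom j hj u hu0 hu s i (by omega)]
      simp only [mul_assoc]

theorem cox_card {Q : Type*} [Group Q] (T : ℕ → Q) (N : ℕ)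
    (hsq : ∀ i, i < N → T i * T i = 1)
    (hbr : ∀ i, i + 1 < N → T i * T (i + 1) * T i = T (i + 1) * T i * T (i + 1))
    (hcom : ∀ i j, i + 2 ≤ j → j < N → T i * T j = T j * T i) (j : ℕ) (hj : j ≤ N) :
    Finite (Subgroup.closure (T '' {i | i < j})) ∧
    Nat.card (Subgroup.closure (T '' {i | i < j})) ≤ (j + 1).factorial := by
  induction j with
  | zero => simp; infer_instance
  | succ j ih =>
    obtain ⟨hfin, hcard⟩ := ih (by omega)
    set H := Subgroup.closure (T '' {i | i < j}) with hH
    have hTH : ∀ i, i < j → T i ∈ H := fun i hi => Subgroup.subset_closure ⟨i, hi, rfl⟩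
    let u : ℕ → Q := fun r => Nat.rec 1 (fun r x => x * T (j - r)) r
    have hu0 : u 0 = 1 := rfl
    have hu : ∀ r, u (r + 1) = u r * T (j - r) := fun r => rfl
    let F : H × Fin (j + 2) → Q := fun x => x.1 * u x.2
    have step : ∀ x i, (∃ y, F y = x) → i ≤ j → ∃ y, F y = x * T i := by
      rintro x i ⟨⟨h, ⟨r, hr⟩⟩, rfl⟩ hi
      rcases lt_trichotomy (i + r) j with h1 | h1 | h1
      · refine ⟨⟨h * ⟨T i, hTH i (by omega)⟩, ⟨r, hr⟩⟩, ?_⟩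
        simp only [F, Subgroup.coe_mul]
        rw [mul_assoc, mul_assoc, cox_u_comm T N hcom j (by omega) u hu0 hu r i h1]
      · refine ⟨⟨h, ⟨r + 1, by omega⟩⟩, ?_⟩
        simp only [F]
        rw [hu, mul_assoc, show j - r = i by omega]
      · by_cases h2 : i + r = j + 1
        · obtain ⟨s, rfl⟩ : ∃ s, r = s + 1 := ⟨r - 1, by omega⟩
          refine ⟨⟨h, ⟨s, by omega⟩⟩, ?_⟩
          simp only [F]
          rw [hu, mul_assoc, mul_assoc, show j - s = i by omega, hsq i (by omega), mul_one]
        · obtain ⟨i, rfl⟩ : ∃ s, i = s + 1 := ⟨i - 1, by omega⟩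
          refine ⟨⟨h * ⟨T i, hTH i (by omega)⟩, ⟨r, hr⟩⟩, ?_⟩
          simp only [F, Subgroup.coe_mul]
          rw [mul_assoc, mul_assoc, cox_u_shift T N hbr hcom j (by omega) u hu0 hu r i (by omega)
            (by omega) (by omega)]
    have hall : ∀ x ∈ Subgroup.closure (T '' {i | i < j + 1}), ∃ y, F y = x := by
      intro x hx
      induction hx using Subgroup.closure_induction_right with
      | one => exact ⟨⟨1, 0⟩, by simp [F, hu0]⟩
      | mul_right x hx y hy ih =>
        obtain ⟨i, hi, rfl⟩ := hy
        exact step x i ih (Nat.lt_succ_iff.1 hi)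
      | mul_inv_cancel x hx y hy ih =>
        obtain ⟨i, hi, rfl⟩ := hy
        have hi' : i < j + 1 := hi
        rw [inv_eq_of_mul_eq_one_right (hsq i (by omega))]
        exact step x i ih (Nat.lt_succ_iff.1 hi)
    choose! g hg using hall
    let g' : Subgroup.closure (T '' {i | i < j + 1}) → H × Fin (j + 2) := fun x => g x
    have hinj : Function.Injective g' := by
      intro x y hxy
      apply Subtype.ext
      rw [← hg x x.2, ← hg y y.2]
      exact congrArg F hxy
    refine ⟨Finite.of_injective g' hinj, ?_⟩
    refine (Nat.card_le_card_of_injective g' hinj).trans ?_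
    rw [Nat.card_prod, Nat.card_fin, Nat.factorial_succ (j + 1), mul_comm]
    exact Nat.mul_le_mul_left _ hcard

theorem cox_inj {Q : Type*} [Group Q] (T : ℕ → Q) (N : ℕ)
    (hsq : ∀ i, i < N → T i * T i = 1)
    (hbr : ∀ i, i + 1 < N → T i * T (i + 1) * T i = T (i + 1) * T i * T (i + 1))
    (hcom : ∀ i j, i + 2 ≤ j → j < N → T i * T j = T j * T i)
    (P : Q →* Equiv.Perm (Fin (N + 1)))
    (hP : ∀ i : Fin N, P (T i) = Equiv.swap i.castSucc i.succ) :
    (∀ p, ∃ x ∈ Subgroup.closure (T '' {i | i < N}), P x = p) ∧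
    (∀ x ∈ Subgroup.closure (T '' {i | i < N}), P x = 1 → x = 1) := by
  obtain ⟨hfin, hcard⟩ := cox_card T N hsq hbr hcom N le_rfl
  set K := Subgroup.closure (T '' {i | i < N}) with hK
  have hsurj : ∀ p, ∃ x ∈ K, P x = p := by
    intro p
    have h1 : p ∈ Subgroup.map P K := by
      have h2 : p ∈ Submonoid.closure (Set.range fun i : Fin N ↦ Equiv.swap i.castSucc i.succ) := by
        rw [Equiv.Perm.mclosure_swap_castSucc_succ]; trivial
      refine (Submonoid.closure_le (S := (Subgroup.map P K).toSubmonoid)).2 ?_ h2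
      rintro _ ⟨i, rfl⟩
      exact ⟨T i, Subgroup.subset_closure ⟨i, i.2, rfl⟩, hP i⟩
    obtain ⟨x, hx, rfl⟩ := h1
    exact ⟨x, hx, rfl⟩
  refine ⟨hsurj, ?_⟩
  have hs : Function.Surjective (P.comp K.subtype) := by
    intro p
    obtain ⟨x, hx, rfl⟩ := hsurj p
    exact ⟨⟨x, hx⟩, rfl⟩
  have hb := hs.bijective_of_nat_card_le (by
    rw [Nat.card_eq_fintype_card (α := Equiv.Perm _), Fintype.card_perm, Fintype.card_fin]
    exact hcard)
  intro x hx h1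
  have := hb.1 (a₁ := ⟨x, hx⟩) (a₂ := 1) (by simpa using h1)
  exact congrArg Subtype.val this

end PartB

section PartC

theorem cycleType_pow_cop_s12 {α : Type*} [Fintype α] [DecidableEq α] (σ : Equiv.Perm α) (m : ℕ)
    (h : (orderOf σ).Coprime m) : (σ ^ m).cycleType = σ.cycleType := by
  induction σ using Equiv.Perm.cycle_induction_on with
  | base_one => simp
  | base_cycles σ hσ =>
    have hc : (σ ^ m).IsCycle := by
      have := hσ.pow_iff (n := m)
      rw [this]; exact h.symm
    rw [hc.cycleType, hσ.cycleType, Equiv.Perm.support_pow_coprime h.symm]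
  | induction_disjoint σ τ hd hσ h1 h2 =>
    rw [hd.orderOf] at h
    rw [hd.commute.mul_pow, (hd.pow_disjoint_pow m m).cycleType_mul, hd.cycleType_mul,
      h1 (h.coprime_dvd_left (Nat.dvd_lcm_left _ _)), h2 (h.coprime_dvd_left (Nat.dvd_lcm_right _ _))]

theorem perm_conj_pow {α : Type*} [Fintype α] [DecidableEq α] (σ : Equiv.Perm α) (m : ℕ)
    (h : (orderOf σ).Coprime m) : ∃ w, w * σ * w⁻¹ = σ ^ m := by
  have := (Equiv.Perm.isConj_iff_cycleType_eq).2 (cycleType_pow_cop_s12 σ m h).symm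
  exact isConj_iff.1 this

end PartC

section PartC2

/-- all lifts of `p`, `q` commute up to `e` -/
def ACom {S P : Type*} [Group S] [Group P] (f : S →* P) (e : S) (p q : P) : Prop :=
  ∀ x y, f x = p → f y = q → x * y = e * (y * x)

variable {S P : Type*} [Group S] [Group P] {f : S →* P} {z : S}

theorem lift_two (_hz : ∀ x, z * x = x * z) (_hzz : z * z = 1)
    (hk : ∀ x, f x = 1 → x = 1 ∨ x = z) {x y : S} (h : f x = f y) : x = y ∨ x = z * y := by
  have := hk (x * y⁻¹) (by simp [h])
  rcases this with h | h
  · left; exact mul_inv_eq_one.1 h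
  · right; exact mul_inv_eq_iff_eq_mul.1 h

theorem acom_of {e : S} (he : e = 1 ∨ e = z) (hz : ∀ x, z * x = x * z) (hzz : z * z = 1)
    (hk : ∀ x, f x = 1 → x = 1 ∨ x = z) (x y : S) (h : x * y = e * (y * x)) :
    ACom f e (f x) (f y) := by
  intro x' y' hx hy
  have hc : ∀ a b, a * (z * b) = z * (a * b) := by
    intro a b; rw [← mul_assoc, ← hz a, mul_assoc]
  have hec : ∀ a b, a * (e * b) = e * (a * b) := by
    rcases he with rfl | rfl
    · simp
    · exact hc
  rcases lift_two hz hzz hk hx with rfl | rfl <;> rcases lift_two hz hzz hk hy with rfl | rfl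
  · exact h
  · rw [hc, h, mul_assoc, hec]
  · rw [hc, mul_assoc, h, hec]
  · rw [hc, mul_assoc, h, mul_assoc, hc, hec, hec, hc y x]

theorem acom_conj {e : S} (he : e = 1 ∨ e = z) (hz : ∀ x, z * x = x * z) (hf : Function.Surjective f)
    {p q : P} (h : ACom f e p q) (g : P) : ACom f e (g * p * g⁻¹) (g * q * g⁻¹) := by
  intro x y hx hy
  obtain ⟨w, rfl⟩ := hf g
  have := h (w⁻¹ * x * w) (w⁻¹ * y * w) (by simp [hx, mul_assoc]) (by simp [hy, mul_assoc])
  have hec : ∀ a, a * e = e * a := by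
    rcases he with rfl | rfl
    · simp
    · intro a; exact (hz a).symm
  have h2 : w⁻¹ * (x * y) * w = w⁻¹ * (e * (y * x)) * w := by
    calc w⁻¹ * (x * y) * w = w⁻¹ * x * w * (w⁻¹ * y * w) := by group
      _ = e * (w⁻¹ * y * w * (w⁻¹ * x * w)) := this
      _ = (e * w⁻¹) * (y * x) * w := by group
      _ = _ := by rw [← hec]; group
  exact mul_left_cancel (mul_right_cancel h2)

theorem acom_symm (_hz : ∀ x, z * x = x * z) (hzz : z * z = 1)
    {p q : P} (h : ACom f z p q) : ACom f z q p := by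
  intro x y hx hy
  rw [h y x hy hx, ← mul_assoc, hzz, one_mul]

theorem acom_mul {e d : S} (he : e = 1 ∨ e = z) (hd : d = 1 ∨ d = z) (hz : ∀ x, z * x = x * z)
    (hf : Function.Surjective f) {p q r : P} (h : ACom f e p q) (h' : ACom f d p r) :
    ACom f (e * d) p (q * r) := by
  intro x y hx hy
  obtain ⟨a, rfl⟩ := hf q
  have h1 := h x a hx rfl
  have h2 := h' x (a⁻¹ * y) hx (by simp [hy])
  have hdc : ∀ a, a * d = d * a := by
    rcases hd with rfl | rfl
    · simp
    · intro a; exact (hz a).symm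
  calc x * y = (x * a) * (a⁻¹ * y) := by group
    _ = e * a * (x * (a⁻¹ * y)) := by rw [h1]; group
    _ = e * (a * d) * a⁻¹ * y * x := by rw [h2]; group
    _ = _ := by rw [hdc]; group

theorem acom_ext {n : ℕ} {f : S →* Equiv.Perm (Fin n)} (hf : Function.Surjective f)
    (hz : ∀ x, z * x = x * z) (hzz : z * z = 1)
    (hk : ∀ x, f x = 1 → x = 1 ∨ x = z) (p : Equiv.Perm (Fin n))
    (hp : ∀ i j, i ≠ j → p.Disjoint (Equiv.swap i j) → ACom f z p (Equiv.swap i j))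
    (q : Equiv.Perm (Fin n)) (hd : p.Disjoint q) :
    (q.sign = 1 → ACom f 1 p q) ∧ (q.sign = -1 → ACom f z p q) := by
  induction hc : q.support.card using Nat.strong_induction_on generalizing q with
  | _ c ih =>
  by_cases hq : q = 1
  · subst hq
    refine ⟨fun _ x y hx hy => ?_, fun h => ?_⟩
    · rcases hk y hy with rfl | rfl
      · simp
      · simp [hz]
    · simp at h
  · obtain ⟨a, ha⟩ : ∃ a, q a ≠ a := by
      by_contra! h
      exact hq (Equiv.ext h)
    have hlt := Equiv.Perm.card_support_swap_mul ha
    have hdis : p.Disjoint (Equiv.swap a (q a)) := by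
      rw [Equiv.Perm.disjoint_iff_disjoint_support] at hd ⊢
      refine hd.mono_right ?_
      rw [Equiv.Perm.support_swap (Ne.symm ha)]
      intro x hx
      simp at hx ⊢
      rcases hx with rfl | rfl
      · exact ha
      · simpa using ha
    have hd' := hdis.mul_right hd
    obtain ⟨i1, i2⟩ := ih _ (hc ▸ hlt) _ hd' rfl
    have hs := hp a (q a) (Ne.symm ha) hdis
    have hqq : q = Equiv.swap a (q a) * (Equiv.swap a (q a) * q) := by
      rw [← mul_assoc, Equiv.swap_mul_self, one_mul]
    have hsg : (Equiv.swap a (q a) * q).sign = - q.sign := by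
      rw [Equiv.Perm.sign_mul, Equiv.Perm.sign_swap (Ne.symm ha)]; simp
    rw [hsg] at i1 i2
    constructor
    · intro h
      have := acom_mul (Or.inr rfl) (Or.inr rfl) hz hf hs (i2 (by rw [h]))
      rwa [hzz, ← hqq] at this
    · intro h
      have := acom_mul (Or.inr rfl) (Or.inl rfl) hz hf hs (i1 (by rw [h]; simp))
      rwa [mul_one, ← hqq] at this

theorem swap_pair_conj {α : Type*} [DecidableEq α] [Fintype α] (i j k l i' j' k' l' : α)
    (h : [i, j, k, l].Nodup) (h' : [i', j', k', l'].Nodup) :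
    ∃ g : Equiv.Perm α, g * Equiv.swap i j * g⁻¹ = Equiv.swap i' j' ∧
      g * Equiv.swap k l * g⁻¹ = Equiv.swap k' l' := by
  let u : Fin 4 ↪ α := ⟨[i, j, k, l].get, List.nodup_iff_injective_get.1 h⟩
  let v : Fin 4 ↪ α := ⟨[i', j', k', l'].get, List.nodup_iff_injective_get.1 h'⟩
  have := Equiv.Perm.isMultiplyPretransitive α 4
  obtain ⟨g, hg⟩ := MulAction.exists_smul_eq (Equiv.Perm α) u v
  have e0 : g i = i' := DFunLike.congr_fun hg 0
  have e1 : g j = j' := DFunLike.congr_fun hg 1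
  have e2 : g k = k' := DFunLike.congr_fun hg 2
  have e3 : g l = l' := DFunLike.congr_fun hg 3
  refine ⟨g, ?_, ?_⟩
  · rw [← e0, ← e1, Equiv.swap_apply_apply]
  · rw [← e2, ← e3, Equiv.swap_apply_apply]

theorem swap_disj_nodup {α : Type*} [DecidableEq α] [Fintype α] {i j k l : α} (h1 : i ≠ j)
    (h2 : k ≠ l) (h : (Equiv.swap i j).Disjoint (Equiv.swap k l)) : [i, j, k, l].Nodup := by
  rw [Equiv.Perm.disjoint_iff_disjoint_support, Equiv.Perm.support_swap h1,
    Equiv.Perm.support_swap h2] at h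
  simp at h ⊢
  grind

theorem acom_all {n : ℕ} {f : S →* Equiv.Perm (Fin n)} (hf : Function.Surjective f)
    (hz : ∀ x, z * x = x * z) (hzz : z * z = 1)
    (hk : ∀ x, f x = 1 → x = 1 ∨ x = z) (i j k l : Fin n) (hn : [i, j, k, l].Nodup)
    (hb : ACom f z (Equiv.swap i j) (Equiv.swap k l))
    (p q : Equiv.Perm (Fin n)) (hd : p.Disjoint q) (hp : p.sign = -1) (hq : q.sign = -1) :
    ACom f z p q := by
  refine (acom_ext hf hz hzz hk p ?_ q hd).2 hq
  intro a b hab hd'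
  refine acom_symm hz hzz ((acom_ext hf hz hzz hk (Equiv.swap a b) ?_ p hd'.symm).2 hp)
  intro c d hcd hd''
  obtain ⟨g, h1, h2⟩ := swap_pair_conj i j k l a b c d hn (swap_disj_nodup hab hcd hd'')
  rw [← h1, ← h2]
  exact acom_conj (Or.inr rfl) hz hf hb g

end PartC2

section PartC3

variable {S : Type*} [Group S] {z : S}

theorem braid_fix (hz : ∀ x, z * x = x * z) (hzz : z * z = 1) {c e t s : S} (hc : c = 1 ∨ c = z)
    (he : e = 1 ∨ e = z) (h : t * s * t = e * (s * t * s)) :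
    c * t * (c * e * s) * (c * t) = c * e * s * (c * t) * (c * e * s) := by
  have cc : ∀ a, Commute a c := by
    rcases hc with rfl | rfl
    · exact fun a => Commute.one_right a
    · exact fun a => (hz a).symm
  have ce : ∀ a, Commute a e := by
    rcases he with rfl | rfl
    · exact fun a => Commute.one_right a
    · exact fun a => (hz a).symm
  have cd : ∀ a, Commute a (c * e) := fun a => (cc a).mul_right (ce a)
  rw [(cd t).mul_mul_mul_comm, (cc (t * s)).mul_mul_mul_comm, (cc s).mul_mul_mul_comm,
    (cd (s * t)).mul_mul_mul_comm, h, ← mul_assoc]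
  congr 1
  rcases hc with rfl | rfl <;> rcases he with rfl | rfl <;> simp [hzz]

theorem swap_braid {α : Type*} [DecidableEq α] {a b c : α} (h1 : a ≠ b) (h2 : b ≠ c) (h3 : a ≠ c) :
    Equiv.swap a b * Equiv.swap b c * Equiv.swap a b =
      Equiv.swap b c * Equiv.swap a b * Equiv.swap b c := by
  rw [Equiv.swap_mul_swap_mul_swap h1 h3, Equiv.swap_comm a b, Equiv.swap_comm b c,
    Equiv.swap_mul_swap_mul_swap h2.symm h3.symm, Equiv.swap_comm]

theorem conj_of_comm (N : ℕ) (f : S →* Equiv.Perm (Fin (N + 1)))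
    (hz : ∀ x, z * x = x * z) (hzz : z * z = 1) (hfz : f z = 1)
    (hk : ∀ x, f x = 1 → x = 1 ∨ x = z) (T : ℕ → S) (hsq : ∀ i, i < N → T i * T i = 1)
    (hT : ∀ i : Fin N, f (T i) = Equiv.swap i.castSucc i.succ)
    (hcom : ∀ i j, i + 2 ≤ j → j < N → T i * T j = T j * T i)
    (m : ℕ) (hm : Odd m) (x : S) (w : Equiv.Perm (Fin (N + 1)))
    (hw : w * f x * w⁻¹ = f x ^ m) : ∃ w, w * x * w⁻¹ = x ^ m := by
  have hbr0 : ∀ i, ∃ e, (e = 1 ∨ e = z) ∧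
      (i + 1 < N → T i * T (i + 1) * T i = e * (T (i + 1) * T i * T (i + 1))) := by
    intro i
    by_cases hi : i + 1 < N
    · have h1 : f (T i) = _ := hT ⟨i, by omega⟩
      have h2 : f (T (i + 1)) = _ := hT ⟨i + 1, hi⟩
      have : f (T i * T (i + 1) * T i) = f (T (i + 1) * T i * T (i + 1)) := by
        simp only [map_mul, h1, h2]
        have e : (⟨i, by omega⟩ : Fin N).succ = (⟨i + 1, hi⟩ : Fin N).castSucc := rfl
        rw [e]
        exact swap_braid (by simp [Fin.ext_iff]) (by simp [Fin.ext_iff]) (by simp [Fin.ext_iff]; omega)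
      rcases lift_two hz hzz hk this with h | h
      · exact ⟨1, Or.inl rfl, fun _ => by rw [h, one_mul]⟩
      · exact ⟨z, Or.inr rfl, fun _ => h⟩
    · exact ⟨1, Or.inl rfl, fun h => absurd h hi⟩
  choose e he hbr using hbr0
  let c : ℕ → S := fun r => Nat.rec 1 (fun r y => y * e r) r
  have hc1 : ∀ r, c (r + 1) = c r * e r := fun r => rfl
  have hc : ∀ r, c r = 1 ∨ c r = z := by
    intro r
    induction r with
    | zero => exact Or.inl rfl
    | succ r ih =>
      rw [hc1]
      rcases ih with h | h <;> rcases he r with h' | h' <;> simp [h, h', hzz]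
  have cc : ∀ r a, Commute a (c r) := by
    intro r a
    rcases hc r with h | h <;> rw [h]
    · exact Commute.one_right a
    · exact (hz a).symm
  have hcc : ∀ r, c r * c r = 1 := by
    intro r
    rcases hc r with h | h <;> rw [h]
    · simp
    · exact hzz
  have hfc : ∀ r, f (c r) = 1 := by
    intro r
    rcases hc r with h | h <;> rw [h]
    · simp
    · exact hfz
  obtain ⟨hs, hi⟩ := cox_inj (fun i => c i * T i) N
    (fun i hi => by rw [(cc i (T i)).mul_mul_mul_comm, hcc, hsq i hi, one_mul])
    (fun i hi => by
      simp only [hc1]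
      exact braid_fix hz hzz (hc i) (he i) (hbr i hi))
    (fun i j h1 h2 => by
      rw [(cc j (T i)).mul_mul_mul_comm, (cc i (T j)).mul_mul_mul_comm, hcom i j h1 h2,
        (cc j (c i)).eq]) f
    (fun i => by rw [map_mul, hfc, one_mul, hT])
  obtain ⟨x0, hx0, hx1⟩ := hs (f x)
  obtain ⟨w0, hw0, rfl⟩ := hs w
  have key : w0 * x0 * w0⁻¹ = x0 ^ m := by
    have := hi (w0 * x0 * w0⁻¹ * (x0 ^ m)⁻¹) (Subgroup.mul_mem _ (Subgroup.mul_mem _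
      (Subgroup.mul_mem _ hw0 hx0) (Subgroup.inv_mem _ hw0)) (Subgroup.inv_mem _
        (Subgroup.pow_mem _ hx0 m))) (by simp [hx1, hw])
    exact mul_inv_eq_one.1 this
  refine ⟨w0, ?_⟩
  rcases lift_two hz hzz hk hx1.symm with rfl | rfl
  · exact key
  · have hzm : z ^ m = z := by
      obtain ⟨r, rfl⟩ := hm
      rw [pow_succ, pow_mul, pow_two, hzz, one_pow, one_mul]
    rw [(show Commute z x0 from hz x0).mul_pow, hzm, ← key, ← mul_assoc w0, ← hz w0]
    simp only [mul_assoc]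

theorem even_cycle {n : ℕ} (σ : Equiv.Perm (Fin n)) (h : 2 ∣ orderOf σ) (hs : σ.sign = 1) :
    ∃ c τ : Equiv.Perm (Fin n), σ = c * τ ∧ c.Disjoint τ ∧ c.sign = -1 ∧ τ.sign = -1 := by
  rw [← Equiv.Perm.lcm_cycleType] at h
  have h1 : 2 ∣ σ.cycleType.prod :=
    h.trans (Multiset.lcm_dvd.2 fun b hb => Multiset.dvd_prod hb)
  obtain ⟨r, hr, h2⟩ := (Nat.prime_two.prime.exists_mem_multiset_dvd h1)
  obtain ⟨c, τ, h3, hd, hc, h4⟩ := Equiv.Perm.mem_cycleType_iff.1 hr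
  have hcs : c.sign = -1 := by
    rw [hc.sign, h4, (even_iff_two_dvd.2 h2).neg_one_pow]
  refine ⟨c, τ, h3, hd, hcs, ?_⟩
  rw [h3, Equiv.Perm.sign_mul, hcs] at hs
  have := congrArg (fun u => -u) hs
  simpa using this

theorem lemC (N : ℕ) (f : S →* Equiv.Perm (Fin (N + 1))) (hf : Function.Surjective f)
    (hz : ∀ x, z * x = x * z) (hzz : z * z = 1) (hfz : f z = 1)
    (hk : ∀ x, f x = 1 → x = 1 ∨ x = z) (T : ℕ → S) (hsq : ∀ i, i < N → T i * T i = 1)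
    (hT : ∀ i : Fin N, f (T i) = Equiv.swap i.castSucc i.succ)
    (ℓ : ℕ) (hl : ℓ.Prime) (x : S) (hx : ¬ ℓ ∣ orderOf x) (hs : (f x).sign = 1) :
    ∃ w, w * x * w⁻¹ = x ^ ℓ := by
  have hcop : (orderOf (f x)).Coprime ℓ := by
    rw [Nat.coprime_comm, hl.coprime_iff_not_dvd]
    exact fun h => hx (h.trans (orderOf_map_dvd f x))
  obtain ⟨w, hw⟩ := perm_conj_pow (f x) ℓ hcop
  obtain ⟨w0, rfl⟩ := hf w
  have hzo : ∀ m, Odd m → z ^ m = z := by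
    rintro m ⟨r, rfl⟩
    rw [pow_succ, pow_mul, pow_two, hzz, one_pow, one_mul]
  rcases lift_two hz hzz hk (x := w0 * x * w0⁻¹) (y := x ^ ℓ) (by simp [hw]) with h | h
  · exact ⟨w0, h⟩
  have hpow : ∀ m, w0 * x ^ m * w0⁻¹ = z ^ m * (x ^ m) ^ ℓ := by
    intro m
    rw [← conj_pow, h, (show Commute z (x ^ ℓ) from hz _).mul_pow, ← pow_mul, ← pow_mul, mul_comm ℓ]
  have hdone : z = 1 → ∃ w, w * x * w⁻¹ = x ^ ℓ := fun hz1 => ⟨w0, by rw [h, hz1, one_mul]⟩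
  by_cases h2 : ℓ = 2
  · apply hdone
    have := hpow (orderOf x)
    rw [pow_orderOf_eq_one, hzo _ (by rw [h2] at hx; rwa [← Nat.not_even_iff_odd, even_iff_two_dvd])]
      at this
    simpa using this.symm
  have hlo : Odd ℓ := hl.odd_of_ne_two h2
  by_cases h3 : 2 ∣ orderOf (f x)
  · by_cases hcom : ∀ i j, i + 2 ≤ j → j < N → T i * T j = T j * T i
    · exact conj_of_comm N f hz hzz hfz hk T hsq hT hcom ℓ hlo x _ hw
    · push Not at hcom
      obtain ⟨i, j, hij, hj, hne⟩ := hcom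
      have h1 : f (T i) = _ := hT ⟨i, by omega⟩
      have h2 : f (T j) = _ := hT ⟨j, hj⟩
      have hnd : [(⟨i, by omega⟩ : Fin N).castSucc, (⟨i, by omega⟩ : Fin N).succ,
        (⟨j, hj⟩ : Fin N).castSucc, (⟨j, hj⟩ : Fin N).succ].Nodup := by
        simp [Fin.ext_iff]; omega
      have hdj := (Equiv.Perm.disjoint_swap_swap hnd)
      have hac : ACom f z (f (T i)) (f (T j)) := by
        refine acom_of (Or.inr rfl) hz hzz hk _ _ ?_
        refine (lift_two hz hzz hk ?_).resolve_left hne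
        rw [map_mul, map_mul, h1, h2, hdj.commute.eq]
      rw [h1, h2] at hac
      obtain ⟨c, τ, e, hd, hc, hτ⟩ := even_cycle _ h3 hs
      have := acom_all hf hz hzz hk _ _ _ _ hnd hac c τ hd hc hτ
      obtain ⟨g, rfl⟩ := hf c
      have key := this g (g⁻¹ * x) rfl (by simp [e])
      have key2 : g * x * g⁻¹ = z * x := by
        rw [mul_inv_eq_iff_eq_mul]
        have h5 : x = z * (g⁻¹ * x * g) := by rw [← key]; group
        calc g * x = g * (z * (g⁻¹ * x * g)) := by rw [← h5]
          _ = (g * z) * (g⁻¹ * x * g) := by group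
          _ = z * x * g := by rw [← hz]; group
      refine ⟨w0 * g, ?_⟩
      calc w0 * g * x * (w0 * g)⁻¹ = w0 * (g * x * g⁻¹) * w0⁻¹ := by group
        _ = (w0 * z) * x * w0⁻¹ := by rw [key2]; group
        _ = z * (w0 * x * w0⁻¹) := by rw [← hz]; group
        _ = x ^ ℓ := by rw [h, ← mul_assoc, hzz, one_mul]
  · apply hdone
    have hodd : Odd (orderOf (f x)) := by rwa [← Nat.not_even_iff_odd, even_iff_two_dvd]
    have := hpow (orderOf (f x))
    rw [hzo _ hodd] at this
    rcases hk (x ^ orderOf (f x)) (by rw [map_pow, pow_orderOf_eq_one]) with h | h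
    · rw [h] at this; simpa using this.symm
    · rw [h, hzo _ hlo, ← hz, mul_inv_cancel_right, hzz] at this; exact this

end PartC3

section PartD

theorem lemD {W : Type*} [Group W] (N : ℕ) (f : W →* Equiv.Perm (Fin (N + 1))) {c : W}
    (hc : ∀ x, c * x = x * c) (hcc : c * c = 1) (hfc : f c = 1)
    (T : ℕ → W) (hsq : ∀ i, i < N → T i * T i = 1)
    (hT : ∀ i : Fin N, f (T i) = Equiv.swap i.castSucc i.succ)
    (hrel : ∀ i j m, i < N → j < N → f (T i * T j) ^ m = 1 →
      (T i * T j) ^ m = 1 ∨ (T i * T j) ^ m = c) :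
    ∃ K : Subgroup W, c ∈ K ∧ (∀ i, i < N → T i ∈ K) ∧ (∀ p, ∃ x ∈ K, f x = p) ∧
      (∀ x ∈ K, f x = 1 → x = 1 ∨ x = c) := by
  have hmz : ∀ x, x ∈ Subgroup.zpowers c → x = 1 ∨ x = c := by
    rintro x ⟨m, rfl⟩
    rcases Int.even_or_odd' m with ⟨r, rfl | rfl⟩
    · left; simp [zpow_mul, pow_two, hcc]
    · right; simp [zpow_add, zpow_mul, pow_two, hcc]
  have hnorm : (Subgroup.zpowers c).Normal := by
    constructor
    intro x hx g
    rcases hmz x hx with rfl | rfl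
    · simp
    · rw [← hc g, mul_inv_cancel_right]; exact hx
  have hcm : c ∈ Subgroup.zpowers c := Subgroup.mem_zpowers c
  let mk : W →* W ⧸ Subgroup.zpowers c := QuotientGroup.mk' _
  have hmk : ∀ x y, (x * y⁻¹ = 1 ∨ x * y⁻¹ = c) → mk x = mk y := by
    intro x y h
    have : mk (x * y⁻¹) = 1 := by
      rw [QuotientGroup.mk'_apply, QuotientGroup.eq_one_iff]
      rcases h with h | h <;> rw [h]
      · exact one_mem _
      · exact hcm
    rw [map_mul, map_inv, mul_inv_eq_one] at this
    exact this
  let P : W ⧸ Subgroup.zpowers c →* Equiv.Perm (Fin (N + 1)) := QuotientGroup.lift _ f (by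
    intro x hx
    rcases hmz x hx with rfl | rfl
    · simp
    · exact hfc)
  have hPmk : ∀ x, P (mk x) = f x := fun x => rfl
  have hinv : ∀ i, i < N → (T i)⁻¹ = T i := fun i hi => inv_eq_of_mul_eq_one_right (hsq i hi)
  obtain ⟨hs, hi⟩ := cox_inj (fun i => mk (T i)) N
    (fun i hi => by rw [← map_mul, hsq i hi, map_one])
    (fun i hi => by
      simp only [← map_mul]
      apply hmk
      have e : T i * T (i + 1) * T i * (T (i + 1) * T i * T (i + 1))⁻¹ = (T i * T (i + 1)) ^ 3 := by
        rw [mul_inv_rev, mul_inv_rev, hinv i (by omega), hinv (i + 1) hi]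
        simp only [pow_succ, pow_zero, one_mul, mul_assoc]
      rw [e]
      refine hrel i (i + 1) 3 (by omega) hi ?_
      have h1 : f (T i) = _ := hT ⟨i, by omega⟩
      have h2 : f (T (i + 1)) = _ := hT ⟨i + 1, hi⟩
      rw [← map_pow, ← e, map_mul, map_inv, mul_inv_eq_one]
      simp only [map_mul, h1, h2]
      have e : (⟨i, by omega⟩ : Fin N).succ = (⟨i + 1, hi⟩ : Fin N).castSucc := rfl
      rw [e]
      exact swap_braid (by simp [Fin.ext_iff]) (by simp [Fin.ext_iff])
        (by simp [Fin.ext_iff]; omega))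
    (fun i j h1 h2 => by
      simp only [← map_mul]
      apply hmk
      have e : T i * T j * (T j * T i)⁻¹ = (T i * T j) ^ 2 := by
        rw [mul_inv_rev, hinv i (by omega), hinv j h2]
        simp only [pow_succ, pow_zero, one_mul, mul_assoc]
      rw [e]
      refine hrel i j 2 (by omega) h2 ?_
      have h3 : f (T i) = _ := hT ⟨i, by omega⟩
      have h4 : f (T j) = _ := hT ⟨j, h2⟩
      have hnd : [(⟨i, by omega⟩ : Fin N).castSucc, (⟨i, by omega⟩ : Fin N).succ,
        (⟨j, h2⟩ : Fin N).castSucc, (⟨j, h2⟩ : Fin N).succ].Nodup := by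
        simp [Fin.ext_iff]; omega
      have hdj := (Equiv.Perm.disjoint_swap_swap hnd)
      rw [← map_pow, ← e, map_mul, map_inv, mul_inv_eq_one, map_mul, map_mul, h3, h4,
        hdj.commute.eq]) P
    (fun i => hT i)
  refine ⟨(Subgroup.closure ((fun i => mk (T i)) '' {i | i < N})).comap mk, ?_, ?_, ?_, ?_⟩
  · rw [Subgroup.mem_comap, hmk c 1 (by simp), map_one]
    exact one_mem _
  · intro i hi
    exact Subgroup.subset_closure ⟨i, hi, rfl⟩
  · intro p
    obtain ⟨y, hy, rfl⟩ := hs p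
    obtain ⟨x, rfl⟩ := QuotientGroup.mk'_surjective _ y
    exact ⟨x, hy, rfl⟩
  · intro x hx h1
    have := hi _ hx h1
    rw [QuotientGroup.mk'_apply, QuotientGroup.eq_one_iff] at this
    exact hmz x this

/-- auxiliary group -/
@[ext] structure WG {G P : Type*} [Group G] [Group P] (f : G →* P) (s0 : {s : P // s * s = 1}) where
  a : G
  b : G
  s : Bool
  h : f b = s0.1 * f a * s0.1

namespace WG

variable {G P : Type*} [Group G] [Group P] {f : G →* P} {s0 : {s : P // s * s = 1}}

theorem ss (x : P) : s0.1 * (s0.1 * x) = x := by rw [← mul_assoc, s0.2, one_mul]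

theorem h' (x : WG f s0) : f x.a = s0.1 * f x.b * s0.1 := by
  rw [x.h]; simp only [mul_assoc, ss, s0.2, mul_one]

instance : Mul (WG f s0) := ⟨fun x y =>
  ⟨x.a * cond x.s y.b y.a, x.b * cond x.s y.a y.b, xor x.s y.s, by
    cases x.s <;> simp only [cond_true, cond_false, map_mul, x.h, y.h, mul_assoc, ss, s0.2,
      mul_one]⟩⟩

theorem mul_a (x y : WG f s0) : (x * y).a = x.a * cond x.s y.b y.a := rfl
theorem mul_b (x y : WG f s0) : (x * y).b = x.b * cond x.s y.a y.b := rfl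
theorem mul_s (x y : WG f s0) : (x * y).s = xor x.s y.s := rfl

instance : One (WG f s0) := ⟨⟨1, 1, false, by simp [s0.2]⟩⟩

theorem one_a : (1 : WG f s0).a = 1 := rfl
theorem one_b : (1 : WG f s0).b = 1 := rfl
theorem one_s : (1 : WG f s0).s = false := rfl

theorem s0inv : (s0.1)⁻¹ = s0.1 := inv_eq_of_mul_eq_one_right s0.2

instance : Inv (WG f s0) := ⟨fun x => ⟨cond x.s x.b⁻¹ x.a⁻¹, cond x.s x.a⁻¹ x.b⁻¹, x.s, by
    cases x.s <;> simp only [cond_true, cond_false, map_inv, x.h, mul_inv_rev, s0inv, mul_assoc, ss,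
      s0.2, mul_one]⟩⟩

theorem inv_a (x : WG f s0) : (x⁻¹).a = cond x.s x.b⁻¹ x.a⁻¹ := rfl
theorem inv_b (x : WG f s0) : (x⁻¹).b = cond x.s x.a⁻¹ x.b⁻¹ := rfl
theorem inv_s (x : WG f s0) : (x⁻¹).s = x.s := rfl

instance : Group (WG f s0) := Group.ofLeftAxioms
  (by
    rintro ⟨a, b, s, h⟩ ⟨c, d, t, h'⟩ ⟨e, g, u, h''⟩
    cases s <;> cases t <;> cases u <;> ext <;> simp [mul_a, mul_b, mul_s, mul_assoc])
  (by
    rintro ⟨a, b, s, h⟩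
    ext <;> simp [mul_a, mul_b, mul_s, one_a, one_b, one_s])
  (by
    rintro ⟨a, b, s, h⟩
    cases s <;> ext <;> simp [mul_a, mul_b, mul_s, one_a, one_b, one_s, inv_a, inv_b, inv_s])

/-- the projection -/
def pr : WG f s0 →* P where
  toFun x := f x.a * cond x.s s0.1 1
  map_one' := by simp [one_a, one_s]
  map_mul' := by
    intro x y
    have hy := y.h
    rw [mul_a, mul_s]
    cases x.s <;> cases y.s <;> simp [hy, mul_assoc, ss, s0.2]

theorem pr_apply (x : WG f s0) : pr x = f x.a * cond x.s s0.1 1 := rfl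

theorem pow_abs (x : WG f s0) (hx : x.s = false) (m : ℕ) :
    (x ^ m).s = false ∧ (x ^ m).a = x.a ^ m ∧ (x ^ m).b = x.b ^ m := by
  induction m with
  | zero => simp [one_a, one_b, one_s]
  | succ m ih =>
    obtain ⟨h1, h2, h3⟩ := ih
    simp [pow_succ, mul_a, mul_b, mul_s, h1, h2, h3, hx]

end WG

end PartD

section PartE

theorem lemE {G : Type*} [Group G] [Finite G] (N : ℕ) (hN : 1 ≤ N)
    (f : G →* Equiv.Perm (Fin (N + 1))) (z : G)
    (hz : ∀ x, z * x = x * z) (hzz : z * z = 1) (hz1 : z ≠ 1) (hfz : f z = 1)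
    (hk : ∀ x, f x = 1 → x = 1 ∨ x = z) (hsgn : ∀ x, (f x).sign = 1)
    (hsurj : ∀ p : Equiv.Perm (Fin (N + 1)), p.sign = 1 → ∃ x, f x = p)
    (ℓ : ℕ) (hl : ℓ.Prime) (g : G) (hg : ¬ ℓ ∣ orderOf g) :
    ∃ φ : G ≃* G, φ g = g ^ ℓ := by
  let sw : Fin N → Equiv.Perm (Fin (N + 1)) := fun i => Equiv.swap i.castSucc i.succ
  have hsw : ∀ i, (sw i).sign = -1 := fun i => Equiv.Perm.sign_swap (by simp [Fin.ext_iff])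
  let s0 : {s : Equiv.Perm (Fin (N + 1)) // s * s = 1} := ⟨sw ⟨0, hN⟩, Equiv.swap_mul_self _ _⟩
  have hs0 : s0.1.sign = -1 := hsw _
  have hq0 : ∀ i : ℕ, ∃ q : G, ∀ h : i < N, f q = sw ⟨i, h⟩ * s0.1 := by
    intro i
    by_cases h : i < N
    · obtain ⟨q, hq⟩ := hsurj (sw ⟨i, h⟩ * s0.1) (by rw [Equiv.Perm.sign_mul, hsw, hs0]; simp)
      exact ⟨q, fun _ => hq⟩
    · exact ⟨1, fun h' => absurd h' h⟩
  choose q hq using hq0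
  let T : ℕ → WG f s0 := fun i => if h : i < N then ⟨q i, (q i)⁻¹, true, by
    have e : sw ⟨i, h⟩ * sw ⟨i, h⟩ = 1 := Equiv.swap_mul_self _ _
    rw [map_inv, hq i h, mul_inv_rev, WG.s0inv, inv_eq_of_mul_eq_one_right e, mul_assoc,
      mul_assoc, s0.2, mul_one]⟩ else 1
  have Ta : ∀ i, i < N → (T i).a = q i := fun i h => by simp [T, h]
  have Tb : ∀ i, i < N → (T i).b = (q i)⁻¹ := fun i h => by simp [T, h]
  have Ts : ∀ i, i < N → (T i).s = true := fun i h => by simp [T, h]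
  let c : WG f s0 := ⟨z, z, false, by rw [hfz, mul_one, s0.2]⟩
  have hc : ∀ x, c * x = x * c := by
    intro x
    ext
    · rw [WG.mul_a, WG.mul_a]; cases x.s <;> exact hz _
    · rw [WG.mul_b, WG.mul_b]; cases x.s <;> exact hz _
    · rw [WG.mul_s, WG.mul_s, Bool.xor_comm]
  have hcc : c * c = 1 := by
    ext
    · exact hzz
    · exact hzz
    · rfl
  have hfc : WG.pr c = 1 := by simp [WG.pr_apply, c, hfz]
  have hsq : ∀ i, i < N → T i * T i = 1 := by
    intro i hi
    ext
    · simp [WG.mul_a, WG.one_a, Ta i hi, Tb i hi, Ts i hi]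
    · simp [WG.mul_b, WG.one_b, Ta i hi, Tb i hi, Ts i hi]
    · simp [WG.mul_s, WG.one_s, Ts i hi]
  have hT : ∀ i : Fin N, WG.pr (T i) = Equiv.swap i.castSucc i.succ := by
    intro i
    rw [WG.pr_apply, Ta i i.2, Ts i i.2, hq i i.2, cond_true, mul_assoc, s0.2, mul_one]
  have hrel : ∀ i j m, i < N → j < N → WG.pr (T i * T j) ^ m = 1 →
      (T i * T j) ^ m = 1 ∨ (T i * T j) ^ m = c := by
    intro i j m hi hj h
    have es : (T i * T j).s = false := by rw [WG.mul_s, Ts i hi, Ts j hj]; rfl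
    have ea : (T i * T j).a = q i * (q j)⁻¹ := by rw [WG.mul_a, Ts i hi, Ta i hi, Tb j hj]; rfl
    have eb : (T i * T j).b = (q i)⁻¹ * q j := by rw [WG.mul_b, Ts i hi, Tb i hi, Ta j hj]; rfl
    obtain ⟨h1, h2, h3⟩ := WG.pow_abs _ es m
    rw [WG.pr_apply, es, cond_false, mul_one, ← map_pow, ← h2] at h
    have h4 : ((T i * T j) ^ m).b = (q i)⁻¹ * (((T i * T j) ^ m).a)⁻¹ * q i := by
      rw [h3, h2, ea, eb]
      have : (q i)⁻¹ * q j = (q i)⁻¹ * (q i * (q j)⁻¹)⁻¹ * ((q i)⁻¹)⁻¹ := by group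
      rw [this, conj_pow, inv_pow, inv_inv]
    rcases hk _ h with h5 | h5
    · left
      ext
      · exact h5
      · rw [h4, h5]; simp [WG.one_b]
      · exact h1
    · right
      have hzi : z⁻¹ = z := inv_eq_of_mul_eq_one_right hzz
      ext
      · exact h5
      · rw [h4, h5, hzi, ← hz, mul_assoc, inv_mul_cancel, mul_one]
      · exact h1
  obtain ⟨K, hcK, hTK, hKs, hKk⟩ := lemD N WG.pr hc hcc hfc T hsq hT hrel
  have huniq : ∀ x ∈ K, x.s = false → x.a = 1 → x = 1 := by
    intro x hx hs ha
    rcases hKk x hx (by rw [WG.pr_apply, hs, ha]; simp) with h | h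
    · exact h
    · exfalso; rw [h] at ha; exact hz1 ha
  have hex : ∀ g : G, ∃ x ∈ K, x.s = false ∧ x.a = g := by
    intro g
    obtain ⟨x, hx, hxg⟩ := hKs (f g)
    have hs : x.s = false := by
      by_contra h
      have h' : x.s = true := by simpa using h
      have := congrArg Equiv.Perm.sign hxg
      rw [WG.pr_apply, h', cond_true, Equiv.Perm.sign_mul, hsgn, hsgn, hs0] at this
      exact absurd this (by decide)
    rw [WG.pr_apply, hs, cond_false, mul_one] at hxg
    rcases lift_two hz hzz hk hxg with h | h
    · exact ⟨x, hx, hs, h⟩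
    · refine ⟨c * x, K.mul_mem hcK hx, ?_, ?_⟩
      · rw [WG.mul_s, hs]; rfl
      · change z * x.a = g
        rw [h, ← mul_assoc, hzz, one_mul]
  choose L LK Ls La using hex
  have mulA : ∀ x y : WG f s0, x.s = false → (x * y).a = x.a * y.a := by
    intro x y h; rw [WG.mul_a, h]; rfl
  have Luniq : ∀ x ∈ K, ∀ y ∈ K, x.s = false → y.s = false → x.a = y.a → x = y := by
    intro x hx y hy h1 h2 h3
    have := huniq (x * y⁻¹) (K.mul_mem hx (K.inv_mem hy)) (by rw [WG.mul_s, WG.inv_s, h1, h2]; rfl)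
      (by rw [mulA _ _ h1, WG.inv_a, h2, h3]; simp)
    exact mul_inv_eq_one.1 this
  have Lmul : ∀ a b, L (a * b) = L a * L b := by
    intro a b
    refine Luniq _ (LK _) _ (K.mul_mem (LK _) (LK _)) (Ls _) (by rw [WG.mul_s, Ls, Ls]; rfl) ?_
    rw [mulA _ _ (Ls _), La, La, La]
  let LH : G →* WG f s0 := MonoidHom.mk' L Lmul
  have LHinj : Function.Injective LH := by
    intro a b h
    have := congrArg WG.a h
    change (L a).a = (L b).a at this
    rwa [La, La] at this
  -- apply the conjugacy lemma in `K`
  obtain ⟨w, hw⟩ := lemC (S := K) (z := ⟨c, hcK⟩) N (WG.pr.comp K.subtype)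
    (by intro p; obtain ⟨x, hx, h⟩ := hKs p; exact ⟨⟨x, hx⟩, h⟩)
    (fun x => Subtype.ext (hc x)) (Subtype.ext hcc) hfc
    (fun x hx => by
      rcases hKk x x.2 hx with h | h
      · left; exact Subtype.ext h
      · right; exact Subtype.ext h)
    (fun i => if h : i < N then ⟨T i, hTK i h⟩ else 1)
    (fun i hi => by
      simp only [hi, dif_pos]
      exact Subtype.ext (hsq i hi))
    (fun i => by
      simp only [i.2, dif_pos]
      exact hT i) ℓ hl ⟨L g, LK g⟩
    (by
      rw [← Subgroup.orderOf_coe]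
      change ¬ ℓ ∣ orderOf (LH g)
      rwa [orderOf_injective LH LHinj])
    (by
      change (WG.pr (L g)).sign = 1
      rw [WG.pr_apply, Ls, cond_false, mul_one, hsgn])
  have hw' : w.1 * L g * w.1⁻¹ = LH g ^ ℓ := congrArg Subtype.val hw
  have hcs : ∀ g, (w.1 * L g * w.1⁻¹).s = false := by
    intro g
    rw [WG.mul_s, WG.mul_s, WG.inv_s, Ls]; cases w.1.s <;> rfl
  let φ : G →* G := MonoidHom.mk' (fun g => (w.1 * L g * w.1⁻¹).a) (by
    intro a b
    rw [← mulA _ _ (hcs a), Lmul]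
    congr 1
    group)
  have hφ : Function.Injective φ := by
    rw [injective_iff_map_eq_one]
    intro a ha
    have h1 := huniq _ (K.mul_mem (K.mul_mem w.2 (LK a)) (K.inv_mem w.2)) (hcs a) ha
    rw [conj_eq_one_iff] at h1
    exact LHinj (h1.trans (map_one LH).symm)
  refine ⟨MulEquiv.ofBijective φ (Finite.injective_iff_bijective.1 hφ), ?_⟩
  change (w.1 * L g * w.1⁻¹).a = g ^ ℓ
  rw [hw', ← map_pow]
  exact La _

theorem lemF (n : ℕ) (G : Type) [Group G] [Fintype G]
    (Z : Subgroup G) [Z.Normal] (hZc : Z ≤ Subgroup.center G) (hZ2 : Nat.card Z = 2)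
    (cover : G ⧸ Z ≃* alternatingGroup (Fin n)) (ℓ : ℕ) (hl : ℓ.Prime) (g : G)
    (hg : ¬ ℓ ∣ orderOf g) : ∃ φ : G ≃* G, φ g = g ^ ℓ := by
  obtain ⟨z, hz1, hzZ⟩ : ∃ z : Z, z ≠ 1 ∧ ∀ x : Z, x = 1 ∨ x = z := by
    obtain ⟨a, b, hab, h⟩ := Nat.card_eq_two_iff.1 hZ2
    have hall : ∀ x : Z, x = a ∨ x = b := fun x => by
      have : x ∈ ({a, b} : Set Z) := by rw [h]; trivial
      simpa using this
    rcases hall 1 with h1 | h1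
    · exact ⟨b, by rw [h1]; exact hab.symm, by rw [h1]; exact hall⟩
    · exact ⟨a, by rw [h1]; exact hab, by rw [h1]; exact fun x => (hall x).symm⟩
  have hzz : (z : G) * z = 1 := by
    have : z * z = 1 := by
      rcases hzZ (z * z) with h | h
      · exact h
      · exact absurd (mul_eq_left.1 h) hz1
    exact congrArg Subtype.val this
  have hz : ∀ x, (z : G) * x = x * z := fun x => (Subgroup.mem_center_iff.1 (hZc z.2) x).symm
  let f : G →* Equiv.Perm (Fin n) :=
    (alternatingGroup (Fin n)).subtype.comp (cover.toMonoidHom.comp (QuotientGroup.mk' Z))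
  have hf1 : ∀ x, f x = 1 ↔ x ∈ Z := by
    intro x
    rw [← QuotientGroup.eq_one_iff x]
    change ((cover (x : G ⧸ Z) : alternatingGroup (Fin n)) : Equiv.Perm (Fin n)) = 1 ↔ _
    rw [OneMemClass.coe_eq_one, EmbeddingLike.map_eq_one_iff]
  have hk : ∀ x, f x = 1 → x = 1 ∨ x = z := by
    intro x hx
    rcases hzZ ⟨x, (hf1 x).1 hx⟩ with h | h
    · left; exact congrArg Subtype.val h
    · right; exact congrArg Subtype.val h
  have hsgn : ∀ x, (f x).sign = 1 := fun x =>
    Equiv.Perm.mem_alternatingGroup.1 (cover (x : G ⧸ Z)).2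
  have hsurj : ∀ p : Equiv.Perm (Fin n), p.sign = 1 → ∃ x, f x = p := by
    intro p hp
    obtain ⟨y, hy⟩ := cover.surjective ⟨p, Equiv.Perm.mem_alternatingGroup.2 hp⟩
    obtain ⟨x, rfl⟩ := QuotientGroup.mk_surjective y
    exact ⟨x, congrArg Subtype.val hy⟩
  by_cases hn : 2 ≤ n
  · obtain ⟨N, rfl⟩ : ∃ N, n = N + 1 := ⟨n - 1, by omega⟩
    exact lemE N (by omega) f z hz hzz (fun h => hz1 (Subtype.ext h)) ((hf1 _).2 z.2) hk hsgn hsurj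
      ℓ hl g hg
  · have : Subsingleton (Fin n) := Fin.subsingleton_iff_le_one.2 (by omega)
    have hgg : g * g = 1 := by
      rcases hk g (Subsingleton.elim _ _) with h | h
      · rw [h, one_mul]
      · rw [h, hzz]
    refine ⟨MulEquiv.refl G, ?_⟩
    change g = g ^ ℓ
    rcases hl.eq_two_or_odd' with h | ⟨r, h⟩
    · have h2 : orderOf g ∣ 2 := orderOf_dvd_of_pow_eq_one (by rw [pow_two, hgg])
      rcases (Nat.dvd_prime Nat.prime_two).1 h2 with h3 | h3
      · rw [orderOf_eq_one_iff.1 h3, one_pow]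
      · rw [h3, h] at hg; exact absurd dvd_rfl hg
    · rw [h, pow_succ, pow_mul, pow_two, hgg, one_pow, one_mul]

end PartE
/-- Let `G` be a double cover of the alternating group `A_n`: a finite group with a
central subgroup `Z` of order `2` such that `G/Z ≅ A_n`.  Every block `b` of `kG`,
with `k` an algebraic closure of `𝔽_ℓ`, has Morita Frobenius number `1`: the block
algebra `kG·b` is Morita equivalent, as a `k`-algebra, to its first Frobenius twist;
i.e. there is a `k`-linear equivalence between the module categories of `kG·b` and of
its first Frobenius twist. -/
theorem double_cover_alternatingGroup_block_morita_frobenius_number_one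
    (ℓ : ℕ) [Fact ℓ.Prime] (k : Type) [Field k] [IsAlgClosed k] [CharP k ℓ]
    [Algebra (ZMod ℓ) k] [IsAlgClosure (ZMod ℓ) k]
    (n : ℕ) (G : Type) [Group G] [Fintype G]
    (Z : Subgroup G) [Z.Normal] (hZc : Z ≤ Subgroup.center G) (hZ2 : Nat.card Z = 2)
    (cover : G ⧸ Z ≃* alternatingGroup (Fin n))
    (b : MonoidAlgebra k G) (hb : IsBlock b) [Fact (IsCentralIdem b)] :
    ∃ E : ModuleCat.{0} (Corner b) ≌ ModuleCat.{0} (FrobTwist ℓ (Corner b)),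
      ∃ hadd : E.functor.Additive,
        @Functor.Linear k _ _ _ _ _ _ _ _ _ E.functor := by
  obtain ⟨ψ, h1, h2⟩ := block_frob (ℓ := ℓ) hb
    (fun g hg => lemF n G Z hZc hZ2 cover ℓ Fact.out g hg)
  exact morita_of_semilinear b ψ h1 h2
end
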